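/- (Proposition 3, Chong-Motani-Garg-El Gamal simplified Han-Kobayashi region) Let p(y1,y2|x1,x2) be a discrete memoryless interference channel, and suppose there exist finite-valued random variables Q, W1, W2, X1, X2 with joint distribution p(q,w1,w2,x1,x2) = p(q)·p(w1|q)·p(w2|q)·p(x1|w1,q)·p(x2|w2,q), with Y1, Y2 obtained from (X1,X2) through the channel. If the rate pair (R1,R2) of nonnegative reals satisfies: R1 < I(X1; Y1 | Q,W2); R2 < I(X2; Y2 | Q,W1); R1+R2 < I(X1; Y1 | Q,W1,W2) + I(W1,X2; Y2 | Q); R1+R2 < I(X2; Y2 | Q,W1,W2) + I(W2,X1; Y1 | Q); R1+R2 < I(W2,X1; Y1 | Q,W1) + I(W1,X2; Y2 | Q,W2); 2R1+R2 < I(X1; Y1 | Q,W1,W2) + I(W2,X1; Y1 | Q) + I(W1,X2; Y2 | Q,W2); R1+2R2 < I(X2; Y2 | Q,W1,W2) + I(W1,X2; Y2 | Q) + I(W2,X1; Y1 | Q,W1); then (R1,R2) is an achievable rate pair for the interference channel p(y1,y2|x1,x2). -/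

import Mathlib

/-!
The proof is by random superposition coding. User `k` splits its rate as `R_k = T_k + S_k`, draws
`2^(n T_k)` cloud centres from `p(w_k | q)` and around each of them `2^(n S_k)` satellite codewords
from `p(x_k | w_k, q)`. A receiver looks for a pair (own codeword, interfering cloud centre) that
passes a likelihood-ratio test, and a wrong interfering cloud centre alone is not counted as an error.

* Union bound. For a fixed time-sharing sequence a wrong pair falls in one of four classes, according
  to whether its own cloud and its interfering cloud are the true ones. The test bounds the ratio of
  each of the four averaged output laws `p(y|w1,w2)`, `p(y|w1)`, `p(y|w2)`, `p(y)` to `p(y|x1,w2)`, so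
  a change of measure (`change_measure`, `wrong_pair_le`) bounds the probability that a wrong pair
  passes. Summing over all pairs and picking a good codebook gives `one_shot`.
* Law of large numbers. Each test holds for the transmitted pair, averaged over i.i.d. time-sharing
  sequences, up to an exponentially small probability as long as its threshold is below the mean of
  the log-likelihood ratio (`miss_decay`, a Chernoff bound). Choosing a good time-sharing sequence
  yields `coding_theorem`: the pair is achievable as soon as, at both receivers, with `a, d, e, g` the
  four means, `S < a`, `S + T' < e`, `T + S < d`, `T + S + T' < g` (`RateOK`). A condition about a
  wrong codeword among a set of size one is void, which is why `RateOK` has extra alternatives.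
* The four means are conditional mutual informations: `a = I(X1;Y1|Q,W1,W2)`, `d = I(X1;Y1|Q,W2)`,
  `e = I(W2,X1;Y1|Q,W1)`, `g = I(W2,X1;Y1|Q)` at receiver 1, and symmetrically at receiver 2 (`cmi_eq`
  and the lemmas `cmi_a`, `cmi_d`, `cmi_e`, `cmi_g`).
* Fourier-Motzkin elimination of the split. With `a ≤ e` and `d ≤ g` (`info_a_le_e`, `info_d_le_g`) the
  seven inequalities give an admissible split provided that also `R1 < a1 + e2` and `R2 < a2 + e1`
  (`rate_split`).
* Exceptional regions. These two inequalities are the ones that the simplified region drops. If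
  `R1 ≥ a1 + e2`, user 1 should not superimpose at all: merging `W1` into `X1` gives a code with
  `T1 = 0` and `S2 = 0`, which works when `R1 < d1`, `R1 + R2 < g1` and `R2 < I(X2;Y2|Q)`. The first is
  assumed, the second follows from the bound on `2 R1 + R2`, and the third from the bound
  `R1 + R2 < a1 + g2` together with `I(X2;Y2|Q) ≥ g2 - e2` (`info_mergeV`, `achievable_merge`). The
  region `R2 ≥ a2 + e1` is symmetric.
-/

/-- Shannon entropy (in bits) of the push-forward of the pmf `p` under the map `f`. -/
noncomputable def margEnt {Ω α : Type*} [Fintype Ω] [Fintype α] [DecidableEq α]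
    (p : Ω → ℝ) (f : Ω → α) : ℝ :=
  ∑ a : α, -((∑ ω : Ω, if f ω = a then p ω else 0) *
      Real.logb 2 (∑ ω : Ω, if f ω = a then p ω else 0))

/-- Conditional entropy H(f | g). -/
noncomputable def condEnt {Ω α β : Type*} [Fintype Ω] [Fintype α] [Fintype β]
    [DecidableEq α] [DecidableEq β] (p : Ω → ℝ) (f : Ω → α) (g : Ω → β) : ℝ :=
  margEnt p (fun ω => (f ω, g ω)) - margEnt p g

/-- Mutual information I(f ; g). -/
noncomputable def mi {Ω α β : Type*} [Fintype Ω] [Fintype α] [Fintype β]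
    [DecidableEq α] [DecidableEq β] (p : Ω → ℝ) (f : Ω → α) (g : Ω → β) : ℝ :=
  margEnt p f + margEnt p g - margEnt p (fun ω => (f ω, g ω))

/-- Conditional mutual information I(f ; g | h). -/
noncomputable def cmi {Ω α β γ : Type*} [Fintype Ω] [Fintype α] [Fintype β] [Fintype γ]
    [DecidableEq α] [DecidableEq β] [DecidableEq γ]
    (p : Ω → ℝ) (f : Ω → α) (g : Ω → β) (h : Ω → γ) : ℝ :=
  margEnt p (fun ω => (f ω, h ω)) + margEnt p (fun ω => (g ω, h ω))
    - margEnt p (fun ω => (f ω, g ω, h ω)) - margEnt p h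

/-- Shannon entropy (in bits) of a pmf. -/
noncomputable def pmfEnt {α : Type*} [Fintype α] (q : α → ℝ) : ℝ :=
  ∑ a : α, -(q a * Real.logb 2 (q a))

/-- Average probability of error of an `(M1, M2, n)` channel code for the interference
channel `chan`, with the two messages independent and uniformly distributed. -/
noncomputable def icCodeErr {X1 X2 Y1 Y2 : Type*} [Fintype X1] [Fintype X2]
    [Fintype Y1] [Fintype Y2] (chan : X1 → X2 → Y1 → Y2 → ℝ) (n M1 M2 : ℕ)
    (e1 : Fin M1 → Fin n → X1) (e2 : Fin M2 → Fin n → X2)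
    (g1 : (Fin n → Y1) → Fin M1) (g2 : (Fin n → Y2) → Fin M2) : ℝ :=
  (1 / ((M1 : ℝ) * (M2 : ℝ))) * ∑ m1 : Fin M1, ∑ m2 : Fin M2,
    ∑ y1n : Fin n → Y1, ∑ y2n : Fin n → Y2,
      if g1 y1n ≠ m1 ∨ g2 y2n ≠ m2 then
        ∏ i, chan (e1 m1 i) (e2 m2 i) (y1n i) (y2n i)
      else 0

/-- The rate pair `(R1, R2)` (in bits per channel use) is achievable for the discrete
memoryless interference channel `chan`. -/
def ICAchievable {X1 X2 Y1 Y2 : Type*} [Fintype X1] [Fintype X2]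
    [Fintype Y1] [Fintype Y2] (chan : X1 → X2 → Y1 → Y2 → ℝ) (R1 R2 : ℝ) : Prop :=
  ∀ ε : ℝ, 0 < ε → ∃ N : ℕ, ∀ n : ℕ, N ≤ n →
    ∃ (e1 : Fin (Nat.ceil ((2 : ℝ) ^ ((n : ℝ) * R1))) → Fin n → X1)
      (e2 : Fin (Nat.ceil ((2 : ℝ) ^ ((n : ℝ) * R2))) → Fin n → X2)
      (g1 : (Fin n → Y1) → Fin (Nat.ceil ((2 : ℝ) ^ ((n : ℝ) * R1))))
      (g2 : (Fin n → Y2) → Fin (Nat.ceil ((2 : ℝ) ^ ((n : ℝ) * R2)))),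
      icCodeErr chan n _ _ e1 e2 g1 g2 ≤ ε

/-- Sample space for the Han-Kobayashi input distribution. -/
abbrev Omega7 (Q W1 W2 X1 X2 Y1 Y2 : Type*) := Q × W1 × W2 × X1 × X2 × Y1 × Y2

section Proj
variable {Q W1 W2 X1 X2 Y1 Y2 : Type*}
def qQ  (ω : Omega7 Q W1 W2 X1 X2 Y1 Y2) : Q := ω.1
def qW1 (ω : Omega7 Q W1 W2 X1 X2 Y1 Y2) : W1 := ω.2.1
def qW2 (ω : Omega7 Q W1 W2 X1 X2 Y1 Y2) : W2 := ω.2.2.1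
def qX1 (ω : Omega7 Q W1 W2 X1 X2 Y1 Y2) : X1 := ω.2.2.2.1
def qX2 (ω : Omega7 Q W1 W2 X1 X2 Y1 Y2) : X2 := ω.2.2.2.2.1
def qY1 (ω : Omega7 Q W1 W2 X1 X2 Y1 Y2) : Y1 := ω.2.2.2.2.2.1
def qY2 (ω : Omega7 Q W1 W2 X1 X2 Y1 Y2) : Y2 := ω.2.2.2.2.2.2
end Proj

/-! ### Sums over product spaces -/

theorem sum_pi_prod {ι α : Type*} [Fintype ι] [DecidableEq ι] [Fintype α] (g : ι → α → ℝ) :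
    ∑ f : ι → α, ∏ i, g i (f i) = ∏ i, ∑ a, g i a := by
  classical
  rw [Finset.prod_univ_sum, Fintype.piFinset_univ]

/-- Marginalising a product weight onto one coordinate. -/
theorem sum_pi_marg1 {ι α : Type*} [Fintype ι] [DecidableEq ι] [Fintype α] (μ : ι → α → ℝ)
    (hμ : ∀ i, ∑ a, μ i a = 1) (i₀ : ι) (F : α → ℝ) :
    ∑ f : ι → α, (∏ i, μ i (f i)) * F (f i₀) = ∑ a, μ i₀ a * F a := by
  have h := sum_pi_prod (fun i a => μ i a * if i = i₀ then F a else 1)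
  simp only [Finset.prod_mul_distrib] at h
  simp only [Finset.prod_ite_eq', Finset.mem_univ, if_true] at h
  rw [h, Fintype.prod_eq_single i₀]
  · simp
  · intro i hi
    simp [hi, hμ]

/-- Marginalising a product weight onto two distinct coordinates. -/
theorem sum_pi_marg2 {ι α : Type*} [Fintype ι] [DecidableEq ι] [Fintype α] (μ : ι → α → ℝ)
    (hμ : ∀ i, ∑ a, μ i a = 1) (i₀ j₀ : ι) (hij : i₀ ≠ j₀) (F : α → α → ℝ) :
    ∑ f : ι → α, (∏ i, μ i (f i)) * F (f i₀) (f j₀) =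
      ∑ a, μ i₀ a * ∑ b, μ j₀ b * F a b := by
  classical
  have key : ∀ c : α, ∑ f : ι → α, (∏ i, μ i (f i)) * ((if f i₀ = c then 1 else 0) * F c (f j₀))
      = μ i₀ c * ∑ b, μ j₀ b * F c b := by
    intro c
    have h := sum_pi_prod (fun i a => μ i a * ((if i = i₀ then (if a = c then 1 else 0) else 1) *
      if i = j₀ then F c a else 1))
    simp only [Finset.prod_mul_distrib] at h
    simp only [Finset.prod_ite_eq', Finset.mem_univ, if_true] at h
    rw [h, Fintype.prod_eq_mul i₀ j₀ hij]
    · simp [hij, hij.symm]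
    · rintro i ⟨h1, h2⟩
      simp [h1, h2, hμ]
  simp_rw [← key]
  rw [Finset.sum_comm]
  refine Finset.sum_congr rfl fun f _ => ?_
  rw [← Finset.mul_sum]
  simp

/-- If a weighted average is at most `B`, some value is at most `B`. -/
theorem exists_le_of_avg {α : Type*} [Fintype α] (μ F : α → ℝ) (B : ℝ) (h0 : ∀ a, 0 ≤ μ a)
    (h1 : ∑ a, μ a = 1) (h : ∑ a, μ a * F a ≤ B) : ∃ a, F a ≤ B := by
  by_contra! hc
  have hlt : ∑ a, μ a * B < ∑ a, μ a * F a := by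
    apply Finset.sum_lt_sum
    · intro a _
      exact mul_le_mul_of_nonneg_left (hc a).le (h0 a)
    · by_contra! hn
      have : ∀ a, μ a = 0 := by
        intro a
        by_contra hne
        have hpos : 0 < μ a := lt_of_le_of_ne (h0 a) (Ne.symm hne)
        exact absurd (hn a (Finset.mem_univ a)) (not_le.2 (mul_lt_mul_of_pos_left (hc a) hpos))
      simp [this] at h1
  rw [← Finset.sum_mul, h1] at hlt
  linarith

/-! ### Random superposition codebooks -/

section Codebook
variable {T S W X : Type*} [Fintype T] [DecidableEq T] [Fintype S] [DecidableEq S]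
  [Fintype W] [Fintype X]

/-- Probability of a superposition codebook: cloud centres `c.1 t` are drawn independently from
`pW`, and the satellites `c.2 (t, s)` independently from `pX (c.1 t)`. -/
noncomputable def bookW (pW : W → ℝ) (pX : W → X → ℝ) (c : (T → W) × (T × S → X)) : ℝ :=
  (∏ t, pW (c.1 t)) * ∏ i : T × S, pX (c.1 i.1) (c.2 i)

variable (pW : W → ℝ) (pX : W → X → ℝ)

set_option linter.unusedSectionVars false in
theorem bookW_nonneg (hW : ∀ w, 0 ≤ pW w) (hX : ∀ w x, 0 ≤ pX w x)
    (c : (T → W) × (T × S → X)) : 0 ≤ bookW pW pX c :=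
  mul_nonneg (Finset.prod_nonneg fun _ _ => hW _) (Finset.prod_nonneg fun _ _ => hX _ _)

theorem bookW_sum_eq (F : (T → W) → (T × S → X) → ℝ) :
    ∑ c : (T → W) × (T × S → X), bookW pW pX c * F c.1 c.2 =
      ∑ w : T → W, (∏ t, pW (w t)) * ∑ x : T × S → X, (∏ i, pX (w i.1) (x i)) * F w x := by
  rw [Fintype.sum_prod_type]
  refine Finset.sum_congr rfl fun w _ => ?_
  rw [Finset.mul_sum]
  exact Finset.sum_congr rfl fun x _ => by simp [bookW, mul_assoc]

variable (hW : ∑ w, pW w = 1) (hX : ∀ w, ∑ x, pX w x = 1)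
include hW hX

theorem bookW_sum : ∑ c : (T → W) × (T × S → X), bookW pW pX c = 1 := by
  have h := bookW_sum_eq (T := T) (S := S) pW pX (fun _ _ => 1)
  simp only [mul_one] at h
  rw [h]
  simp [sum_pi_prod, hX, hW]

theorem bookW_one (i : T × S) (F : W → X → ℝ) :
    ∑ c : (T → W) × (T × S → X), bookW pW pX c * F (c.1 i.1) (c.2 i) =
      ∑ w, pW w * ∑ x, pX w x * F w x := by
  rw [bookW_sum_eq pW pX (fun w x => F (w i.1) (x i))]
  simp_rw [fun w : T → W => sum_pi_marg1 (fun i : T × S => pX (w i.1)) (fun _ => hX _) i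
    (F (w i.1))]
  exact sum_pi_marg1 (fun _ => pW) (fun _ => hW) i.1 (fun w => ∑ x, pX w x * F w x)

/-- A codeword together with a different cloud centre. -/
theorem bookW_cloud (i : T × S) (t : T) (ht : t ≠ i.1) (F : W → X → W → ℝ) :
    ∑ c : (T → W) × (T × S → X), bookW pW pX c * F (c.1 i.1) (c.2 i) (c.1 t) =
      ∑ w', pW w' * ∑ w, pW w * ∑ x, pX w x * F w x w' := by
  rw [bookW_sum_eq pW pX (fun w x => F (w i.1) (x i) (w t))]
  simp_rw [fun w : T → W => sum_pi_marg1 (fun i : T × S => pX (w i.1)) (fun _ => hX _) i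
    (fun x => F (w i.1) x (w t))]
  exact sum_pi_marg2 (fun _ => pW) (fun _ => hW) t i.1 ht
    (fun w' w => ∑ x, pX w x * F w x w')

/-- Two different codewords in the same cloud. -/
theorem bookW_same (i i' : T × S) (hi : i' ≠ i) (ht : i'.1 = i.1) (F : X → W → X → ℝ) :
    ∑ c : (T → W) × (T × S → X), bookW pW pX c * F (c.2 i) (c.1 i'.1) (c.2 i') =
      ∑ w', pW w' * ∑ x', pX w' x' * ∑ x, pX w' x * F x w' x' := by
  rw [bookW_sum_eq pW pX (fun w x => F (x i) (w i'.1) (x i'))]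
  simp_rw [fun w : T → W => sum_pi_marg2 (fun i : T × S => pX (w i.1)) (fun _ => hX _) i' i hi
    (fun x' x => F x (w i'.1) x')]
  rw [ht]
  exact sum_pi_marg1 (fun _ => pW) (fun _ => hW) i.1
    (fun w' => ∑ x', pX w' x' * ∑ x, pX w' x * F x w' x')

/-- Two codewords in different clouds. -/
theorem bookW_diff (i i' : T × S) (ht : i'.1 ≠ i.1) (F : X → W → X → ℝ) :
    ∑ c : (T → W) × (T × S → X), bookW pW pX c * F (c.2 i) (c.1 i'.1) (c.2 i') =
      ∑ w', pW w' * ∑ x', pX w' x' * ∑ w, pW w * ∑ x, pX w x * F x w' x' := by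
  have hi : i' ≠ i := fun h => ht (by rw [h])
  rw [bookW_sum_eq pW pX (fun w x => F (x i) (w i'.1) (x i'))]
  simp_rw [fun w : T → W => sum_pi_marg2 (fun i : T × S => pX (w i.1)) (fun _ => hX _) i' i hi
    (fun x' x => F x (w i'.1) x')]
  have h := sum_pi_marg2 (fun _ : T => pW) (fun _ => hW) i'.1 i.1 ht
    (fun w' w => ∑ x', pX w' x' * ∑ x, pX w x * F x w' x')
  rw [h]
  refine Finset.sum_congr rfl fun w' _ => ?_
  congr 1
  simp_rw [Finset.mul_sum]
  rw [Finset.sum_comm]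
  refine Finset.sum_congr rfl fun x' _ => Finset.sum_congr rfl fun w _ =>
    Finset.sum_congr rfl fun x _ => by ring

end Codebook

/-! ### Averaged channels and the one-shot bound -/

section Kernels
variable {W1 X1 W2 Y : Type*} [Fintype W1] [Fintype X1] [Fintype W2]

/-- Channel from `(x1, w2)` to `y` when the interferer's input is drawn from `pX2 w2`. -/
noncomputable def kV {X2 : Type*} [Fintype X2] (pX2 : W2 → X2 → ℝ) (ch : X1 → X2 → Y → ℝ)
    (x1 : X1) (w2 : W2) (y : Y) : ℝ := ∑ x2, pX2 w2 x2 * ch x1 x2 y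

/-- Output law given both cloud centres. -/
noncomputable def kA (pX1 : W1 → X1 → ℝ) (V : X1 → W2 → Y → ℝ) (w1 : W1) (w2 : W2) (y : Y) : ℝ :=
  ∑ x1, pX1 w1 x1 * V x1 w2 y

/-- Output law given the interferer's cloud centre. -/
noncomputable def kD (pW1 : W1 → ℝ) (pX1 : W1 → X1 → ℝ) (V : X1 → W2 → Y → ℝ) (w2 : W2) (y : Y) :
    ℝ := ∑ w1, pW1 w1 * kA pX1 V w1 w2 y

/-- Output law given the receiver's own cloud centre. -/
noncomputable def kE (pX1 : W1 → X1 → ℝ) (pW2 : W2 → ℝ) (V : X1 → W2 → Y → ℝ) (w1 : W1) (y : Y) :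
    ℝ := ∑ x1, pX1 w1 x1 * ∑ w2, pW2 w2 * V x1 w2 y

/-- Unconditional output law. -/
noncomputable def kG (pW1 : W1 → ℝ) (pX1 : W1 → X1 → ℝ) (pW2 : W2 → ℝ) (V : X1 → W2 → Y → ℝ)
    (y : Y) : ℝ := ∑ w1, pW1 w1 * kE pX1 pW2 V w1 y

/-- Probability that the transmitted triple and the output fail the test `A`. -/
noncomputable def missP [Fintype Y] (pW1 : W1 → ℝ) (pX1 : W1 → X1 → ℝ) (pW2 : W2 → ℝ)
    (V : X1 → W2 → Y → ℝ) (A : W1 → X1 → W2 → Y → Prop) : ℝ :=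
  open Classical in
  ∑ w1, pW1 w1 * ∑ x1, pX1 w1 x1 * ∑ w2, pW2 w2 * ∑ y, V x1 w2 y *
    (if A w1 x1 w2 y then 0 else 1)

end Kernels

section Receiver
variable {W1 X1 W2 X2 Y : Type*} [Fintype W1] [Fintype X1] [Fintype W2] [Fintype X2] [Fintype Y]

/-- Change of measure: if the test `A` forces `U ≤ b * V`, a codeword independent of an output
distributed as `U` passes the test with probability at most `b`. -/
theorem change_measure (pW1 : W1 → ℝ) (pX1 : W1 → X1 → ℝ) (pW2 : W2 → ℝ) (V : X1 → W2 → Y → ℝ)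
    (hW1 : ∀ w, 0 ≤ pW1 w) (hW1s : ∑ w, pW1 w = 1)
    (hX1 : ∀ w x, 0 ≤ pX1 w x) (hX1s : ∀ w, ∑ x, pX1 w x = 1)
    (hW2 : ∀ w, 0 ≤ pW2 w) (hW2s : ∑ w, pW2 w = 1)
    (hV : ∀ x w y, 0 ≤ V x w y) (hVs : ∀ x w, ∑ y, V x w y = 1)
    (A : W1 → X1 → W2 → Y → Prop) [∀ w x w' y, Decidable (A w x w' y)]
    (U : W1 → W2 → Y → ℝ) (b : ℝ) (hb : 0 ≤ b)
    (hA : ∀ w1 x1 w2 y, A w1 x1 w2 y → U w1 w2 y ≤ b * V x1 w2 y) :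
    ∑ y, ∑ w1, pW1 w1 * ∑ x1, pX1 w1 x1 * ∑ w2, pW2 w2 *
      (U w1 w2 y * if A w1 x1 w2 y then 1 else 0) ≤ b := by
  calc _ ≤ ∑ y, ∑ w1, pW1 w1 * ∑ x1, pX1 w1 x1 * ∑ w2, pW2 w2 * (b * V x1 w2 y) := by
        refine Finset.sum_le_sum fun y _ => Finset.sum_le_sum fun w1 _ =>
          mul_le_mul_of_nonneg_left (Finset.sum_le_sum fun x1 _ =>
          mul_le_mul_of_nonneg_left (Finset.sum_le_sum fun w2 _ =>
          mul_le_mul_of_nonneg_left ?_ (hW2 _)) (hX1 _ _)) (hW1 _)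
        split_ifs with h
        · simpa using hA _ _ _ _ h
        · simpa using mul_nonneg hb (hV _ _ _)
    _ = ∑ w1, pW1 w1 * ∑ x1, pX1 w1 x1 * ∑ w2, pW2 w2 * (b * ∑ y, V x1 w2 y) := by
        rw [Finset.sum_comm]
        refine Finset.sum_congr rfl fun w1 _ => ?_
        rw [← Finset.mul_sum, Finset.sum_comm]
        congr 1
        refine Finset.sum_congr rfl fun x1 _ => ?_
        rw [← Finset.mul_sum, Finset.sum_comm]
        congr 1
        refine Finset.sum_congr rfl fun w2 _ => ?_
        rw [← Finset.mul_sum, ← Finset.mul_sum]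
    _ = b := by simp [hVs, ← Finset.sum_mul, hW2s, hX1s, hW1s]
    _ ≤ b := le_rfl

variable {T1 S1 T2 S2 : Type*} [Fintype T1] [DecidableEq T1] [Fintype S1] [DecidableEq S1]
  [Fintype T2] [DecidableEq T2] [Fintype S2] [DecidableEq S2]

/-- Averaging over both codebooks the event that a wrong pair (own codeword `i'`, interfering cloud
`t'`) passes the test, when `(i, j)` was sent. The bound is `ba`, `be`, `bd` or `bg` according to
whether the own cloud and the interfering cloud of the competitor are the true ones. -/
theorem wrong_pair_le (pW1 : W1 → ℝ) (pX1 : W1 → X1 → ℝ) (pW2 : W2 → ℝ) (pX2 : W2 → X2 → ℝ)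
    (ch : X1 → X2 → Y → ℝ)
    (hW1 : ∀ w, 0 ≤ pW1 w) (hW1s : ∑ w, pW1 w = 1)
    (hX1 : ∀ w x, 0 ≤ pX1 w x) (hX1s : ∀ w, ∑ x, pX1 w x = 1)
    (hW2 : ∀ w, 0 ≤ pW2 w) (hW2s : ∑ w, pW2 w = 1)
    (hX2 : ∀ w x, 0 ≤ pX2 w x) (hX2s : ∀ w, ∑ x, pX2 w x = 1)
    (hch : ∀ x x' y, 0 ≤ ch x x' y) (hchs : ∀ x x', ∑ y, ch x x' y = 1)
    (A : W1 → X1 → W2 → Y → Prop) [∀ w x w' y, Decidable (A w x w' y)]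
    (ba be bd bg : ℝ) (hba : 0 ≤ ba) (hbe : 0 ≤ be) (hbd : 0 ≤ bd) (hbg : 0 ≤ bg)
    (hAa : ∀ w1 x1 w2 y, A w1 x1 w2 y → kA pX1 (kV pX2 ch) w1 w2 y ≤ ba * kV pX2 ch x1 w2 y)
    (hAd : ∀ w1 x1 w2 y, A w1 x1 w2 y → kD pW1 pX1 (kV pX2 ch) w2 y ≤ bd * kV pX2 ch x1 w2 y)
    (hAe : ∀ w1 x1 w2 y, A w1 x1 w2 y → kE pX1 pW2 (kV pX2 ch) w1 y ≤ be * kV pX2 ch x1 w2 y)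
    (hAg : ∀ w1 x1 w2 y, A w1 x1 w2 y → kG pW1 pX1 pW2 (kV pX2 ch) y ≤ bg * kV pX2 ch x1 w2 y)
    (i i' : T1 × S1) (hi : i' ≠ i) (j : T2 × S2) (t' : T2) :
    ∑ c1 : (T1 → W1) × (T1 × S1 → X1), bookW pW1 pX1 c1 *
      ∑ c2 : (T2 → W2) × (T2 × S2 → X2), bookW pW2 pX2 c2 *
        ∑ y, ch (c1.2 i) (c2.2 j) y * (if A (c1.1 i'.1) (c1.2 i') (c2.1 t') y then 1 else 0)
      ≤ if i'.1 = i.1 then (if t' = j.1 then ba else be) else (if t' = j.1 then bd else bg) := by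
  have hV : ∀ x w y, 0 ≤ kV pX2 ch x w y := fun x w y =>
    Finset.sum_nonneg fun x2 _ => mul_nonneg (hX2 _ _) (hch _ _ _)
  have hVs : ∀ x w, ∑ y, kV pX2 ch x w y = 1 := by
    intro x w
    simp only [kV]
    rw [Finset.sum_comm]
    simp [← Finset.mul_sum, hchs, hX2s]
  -- average over the interferer's codebook, one output letter at a time
  obtain ⟨K, hK, hKdef⟩ : ∃ K : X1 → W2 → Y → ℝ, (∀ x y (G : W2 → ℝ),
      ∑ c2 : (T2 → W2) × (T2 × S2 → X2), bookW pW2 pX2 c2 * (ch x (c2.2 j) y * G (c2.1 t')) =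
        ∑ w2, pW2 w2 * (K x w2 y * G w2)) ∧
      K = if t' = j.1 then kV pX2 ch else fun x _ y => ∑ w2, pW2 w2 * kV pX2 ch x w2 y := by
    by_cases ht : t' = j.1
    · refine ⟨kV pX2 ch, fun x y G => ?_, by simp [ht]⟩
      subst ht
      rw [bookW_one pW2 pX2 hW2s hX2s j (fun w x2 => ch x x2 y * G w)]
      simp [kV, Finset.sum_mul, mul_assoc]
    · refine ⟨fun x _ y => ∑ w2, pW2 w2 * kV pX2 ch x w2 y, fun x y G => ?_, by simp [ht]⟩
      rw [bookW_cloud pW2 pX2 hW2s hX2s j t' ht (fun w x2 w' => ch x x2 y * G w')]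
      simp [kV, Finset.sum_mul, mul_assoc]
  -- then over the receiver's own codebook
  obtain ⟨U, hU, hUdef⟩ : ∃ U : W1 → W2 → Y → ℝ, (∀ y,
      ∑ c1 : (T1 → W1) × (T1 × S1 → X1), bookW pW1 pX1 c1 *
        ∑ w2, pW2 w2 * (K (c1.2 i) w2 y * if A (c1.1 i'.1) (c1.2 i') w2 y then 1 else 0) =
      ∑ w1, pW1 w1 * ∑ x1, pX1 w1 x1 * ∑ w2, pW2 w2 *
        (U w1 w2 y * if A w1 x1 w2 y then 1 else 0)) ∧
      U = if i'.1 = i.1 then kA pX1 K else fun _ w2 y => kD pW1 pX1 K w2 y := by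
    by_cases ht : i'.1 = i.1
    · refine ⟨kA pX1 K, fun y => ?_, by simp [ht]⟩
      rw [bookW_same pW1 pX1 hW1s hX1s i i' hi ht (fun x w' x' =>
        ∑ w2, pW2 w2 * (K x w2 y * if A w' x' w2 y then 1 else 0))]
      refine Finset.sum_congr rfl fun w1 _ => congrArg _ (Finset.sum_congr rfl fun x1 _ =>
        congrArg _ ?_)
      simp_rw [kA, Finset.sum_mul, Finset.mul_sum]
      rw [Finset.sum_comm]
      exact Finset.sum_congr rfl fun _ _ => Finset.sum_congr rfl fun _ _ => by ring
    · refine ⟨fun _ w2 y => kD pW1 pX1 K w2 y, fun y => ?_, by simp [ht]⟩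
      rw [bookW_diff pW1 pX1 hW1s hX1s i i' ht (fun x w' x' =>
        ∑ w2, pW2 w2 * (K x w2 y * if A w' x' w2 y then 1 else 0))]
      refine Finset.sum_congr rfl fun w1 _ => congrArg _ (Finset.sum_congr rfl fun x1 _ =>
        congrArg _ ?_)
      simp_rw [kD, kA, Finset.sum_mul, Finset.mul_sum, Finset.sum_mul, Finset.mul_sum]
      refine (Finset.sum_congr rfl fun _ _ => Finset.sum_comm).trans ?_
      rw [Finset.sum_comm]
      exact Finset.sum_congr rfl fun _ _ => Finset.sum_congr rfl fun _ _ =>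
        Finset.sum_congr rfl fun _ _ => by ring
  have hlhs : ∑ c1 : (T1 → W1) × (T1 × S1 → X1), bookW pW1 pX1 c1 *
      ∑ c2 : (T2 → W2) × (T2 × S2 → X2), bookW pW2 pX2 c2 *
        ∑ y, ch (c1.2 i) (c2.2 j) y * (if A (c1.1 i'.1) (c1.2 i') (c2.1 t') y then 1 else 0)
      = ∑ y, ∑ w1, pW1 w1 * ∑ x1, pX1 w1 x1 * ∑ w2, pW2 w2 *
        (U w1 w2 y * if A w1 x1 w2 y then 1 else 0) := by
    simp_rw [← hU]
    rw [Finset.sum_comm]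
    refine Finset.sum_congr rfl fun c1 _ => ?_
    rw [← Finset.mul_sum]
    congr 1
    have := fun y => hK (c1.2 i) y (fun w => if A (c1.1 i'.1) (c1.2 i') w y then 1 else 0)
    simp_rw [← this]
    rw [Finset.sum_comm]
    exact Finset.sum_congr rfl fun _ _ => Finset.mul_sum _ _ _
  rw [hlhs]
  have cm := change_measure pW1 pX1 pW2 (kV pX2 ch) hW1 hW1s hX1 hX1s hW2 hW2s hV hVs A U
  by_cases h1 : i'.1 = i.1 <;> by_cases h2 : t' = j.1 <;>
    simp only [h1, h2, if_true, if_false] at hKdef hUdef ⊢ <;> subst hKdef hUdef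
  · exact cm ba hba hAa
  · exact cm be hbe hAe
  · exact cm bd hbd hAd
  · exact cm bg hbg hAg

end Receiver

/-- `p` is a probability mass function on the finite type `α`. -/
def IsPmf {α : Type*} [Fintype α] (p : α → ℝ) : Prop := (∀ a, 0 ≤ p a) ∧ ∑ a, p a = 1

/-- The test `A` used by a receiver controls the four likelihood ratios: a pair of codewords that
passes has output law, averaged over the letters that would be wrong, at most `b` times `V`. -/
structure IsTest {W1 X1 W2 Y : Type*} [Fintype W1] [Fintype X1] [Fintype W2]
    (pW1 : W1 → ℝ) (pX1 : W1 → X1 → ℝ) (pW2 : W2 → ℝ) (V : X1 → W2 → Y → ℝ)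
    (A : W1 → X1 → W2 → Y → Prop) (ba be bd bg : ℝ) : Prop where
  a_nonneg : 0 ≤ ba
  e_nonneg : 0 ≤ be
  d_nonneg : 0 ≤ bd
  g_nonneg : 0 ≤ bg
  a_le : ∀ w1 x1 w2 y, A w1 x1 w2 y → kA pX1 V w1 w2 y ≤ ba * V x1 w2 y
  e_le : ∀ w1 x1 w2 y, A w1 x1 w2 y → kE pX1 pW2 V w1 y ≤ be * V x1 w2 y
  d_le : ∀ w1 x1 w2 y, A w1 x1 w2 y → kD pW1 pX1 V w2 y ≤ bd * V x1 w2 y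
  g_le : ∀ w1 x1 w2 y, A w1 x1 w2 y → kG pW1 pX1 pW2 V y ≤ bg * V x1 w2 y

/-- The union bound over wrong codeword pairs, for `T` own clouds with `S` satellites each and
`T'` interfering clouds. A wrong interfering cloud alone is not an error. -/
noncomputable def wrongB (T S T' : ℕ) (ba be bd bg : ℝ) : ℝ :=
  ((S : ℝ) - 1) * ba + ((S : ℝ) - 1) * ((T' : ℝ) - 1) * be + ((T : ℝ) - 1) * S * bd +
    ((T : ℝ) - 1) * S * ((T' : ℝ) - 1) * bg

theorem sum_ite_eq_else {T : Type*} [Fintype T] [DecidableEq T] (j : T) (a b : ℝ) :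
    ∑ t, (if t = j then a else b) = a + ((Fintype.card T : ℝ) - 1) * b := by
  have : ∀ t, (if t = j then a else b) = b + if t = j then a - b else 0 := by
    intro t; split_ifs <;> ring
  simp_rw [this]
  rw [Finset.sum_add_distrib]
  simp
  ring

theorem wrongB_eq {T S T' : Type*} [Fintype T] [DecidableEq T] [Fintype S] [DecidableEq S]
    [Fintype T'] [DecidableEq T'] (i : T × S) (j : T') (ba be bd bg : ℝ) :
    ∑ p : (T × S) × T', (if p.1 = i then 0 else
      if p.1.1 = i.1 then (if p.2 = j then ba else be) else (if p.2 = j then bd else bg)) =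
      wrongB (Fintype.card T) (Fintype.card S) (Fintype.card T') ba be bd bg := by
  rw [Fintype.sum_prod_type]
  have h1 : ∀ x : T × S, ∑ t : T', (if x = i then 0 else
      if x.1 = i.1 then (if t = j then ba else be) else (if t = j then bd else bg)) =
      if x.1 = i.1 then (if x.2 = i.2 then 0 else ba + ((Fintype.card T' : ℝ) - 1) * be)
      else bd + ((Fintype.card T' : ℝ) - 1) * bg := by
    rintro ⟨t, s⟩
    simp only [Prod.ext_iff]
    by_cases h : t = i.1 <;> by_cases h' : s = i.2 <;> simp [h, h', sum_ite_eq_else]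
  simp_rw [h1]
  rw [Fintype.sum_prod_type]
  have h2 : ∀ t : T, ∑ s : S, (if t = i.1 then
      (if s = i.2 then 0 else ba + ((Fintype.card T' : ℝ) - 1) * be)
      else bd + ((Fintype.card T' : ℝ) - 1) * bg) = if t = i.1 then
        0 + ((Fintype.card S : ℝ) - 1) * (ba + ((Fintype.card T' : ℝ) - 1) * be)
      else (Fintype.card S : ℝ) * (bd + ((Fintype.card T' : ℝ) - 1) * bg) := by
    intro t
    split_ifs with h
    · exact sum_ite_eq_else _ _ _
    · simp [mul_add]
  simp_rw [h2]
  rw [sum_ite_eq_else, wrongB]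
  ring

section Receiver2
variable {W1 X1 W2 X2 Y : Type*} [Fintype W1] [Fintype X1] [Fintype W2] [Fintype X2] [Fintype Y]
  {T1 S1 T2 S2 : Type*} [Fintype T1] [DecidableEq T1] [Fintype S1] [DecidableEq S1]
  [Fintype T2] [DecidableEq T2] [Fintype S2] [DecidableEq S2]

open Classical in
/-- Number of failures at a receiver when `(i, j)` was sent and `y` received: one if the true
triple fails the test, plus the number of competing pairs that pass. -/
noncomputable def failures (A : W1 → X1 → W2 → Y → Prop) (c1 : (T1 → W1) × (T1 × S1 → X1))
    (w2 : T2 → W2) (i : T1 × S1) (j : T2) (y : Y) : ℝ :=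
  (if A (c1.1 i.1) (c1.2 i) (w2 j) y then 0 else 1) +
    ∑ p : (T1 × S1) × T2, if p.1 = i then 0 else
      if A (c1.1 p.1.1) (c1.2 p.1) (w2 p.2) y then 1 else 0

/-- Expected number of failures over the random codebooks. -/
theorem rx_err_le (pW1 : W1 → ℝ) (pX1 : W1 → X1 → ℝ) (pW2 : W2 → ℝ) (pX2 : W2 → X2 → ℝ)
    (ch : X1 → X2 → Y → ℝ) (hW1 : IsPmf pW1) (hX1 : ∀ w, IsPmf (pX1 w))
    (hW2 : IsPmf pW2) (hX2 : ∀ w, IsPmf (pX2 w)) (hch : ∀ x x', IsPmf (ch x x'))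
    (A : W1 → X1 → W2 → Y → Prop) (ba be bd bg : ℝ)
    (hA : IsTest pW1 pX1 pW2 (kV pX2 ch) A ba be bd bg) (i : T1 × S1) (j : T2 × S2) :
    ∑ c1 : (T1 → W1) × (T1 × S1 → X1), bookW pW1 pX1 c1 *
      ∑ c2 : (T2 → W2) × (T2 × S2 → X2), bookW pW2 pX2 c2 *
        ∑ y, ch (c1.2 i) (c2.2 j) y * failures A c1 c2.1 i j.1 y
      ≤ missP pW1 pX1 pW2 (kV pX2 ch) A +
        wrongB (Fintype.card T1) (Fintype.card S1) (Fintype.card T2) ba be bd bg := by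
  classical
  simp only [failures, mul_add, Finset.sum_add_distrib]
  refine add_le_add (le_of_eq ?_) ?_
  · have h2 : ∀ c1 : (T1 → W1) × (T1 × S1 → X1),
        ∑ c2 : (T2 → W2) × (T2 × S2 → X2), bookW pW2 pX2 c2 *
        ∑ y, ch (c1.2 i) (c2.2 j) y * (if A (c1.1 i.1) (c1.2 i) (c2.1 j.1) y then 0 else 1) =
        ∑ w2, pW2 w2 * ∑ y, kV pX2 ch (c1.2 i) w2 y *
          (if A (c1.1 i.1) (c1.2 i) w2 y then 0 else 1) := by
      intro c1
      rw [bookW_one pW2 pX2 hW2.2 (fun w => (hX2 w).2) j (fun w x2 => ∑ y, ch (c1.2 i) x2 y *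
        (if A (c1.1 i.1) (c1.2 i) w y then 0 else 1))]
      refine Finset.sum_congr rfl fun w2 _ => congrArg _ ?_
      simp_rw [kV, Finset.sum_mul, Finset.mul_sum]
      rw [Finset.sum_comm]
      exact Finset.sum_congr rfl fun _ _ => Finset.sum_congr rfl fun _ _ => by ring
    simp_rw [h2]
    rw [bookW_one pW1 pX1 hW1.2 (fun w => (hX1 w).2) i (fun w x => ∑ w2, pW2 w2 *
      ∑ y, kV pX2 ch x w2 y * (if A w x w2 y then 0 else 1)), missP]
  · rw [← wrongB_eq i j.1]
    simp_rw [Finset.mul_sum]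
    simp_rw [Finset.sum_comm (s := (Finset.univ : Finset Y))
      (t := (Finset.univ : Finset ((T1 × S1) × T2)))]
    simp_rw [Finset.sum_comm (s := (Finset.univ : Finset ((T2 → W2) × (T2 × S2 → X2))))
      (t := (Finset.univ : Finset ((T1 × S1) × T2)))]
    rw [Finset.sum_comm]
    refine Finset.sum_le_sum fun p _ => ?_
    split_ifs with h0 h1 h2 h2
    · simp
    all_goals
      have := wrong_pair_le pW1 pX1 pW2 pX2 ch hW1.1 hW1.2 (fun w => (hX1 w).1)
        (fun w => (hX1 w).2) hW2.1 hW2.2 (fun w => (hX2 w).1) (fun w => (hX2 w).2)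
        (fun x x' => (hch x x').1) (fun x x' => (hch x x').2) A ba be bd bg hA.a_nonneg
        hA.e_nonneg hA.d_nonneg hA.g_nonneg hA.a_le hA.d_le hA.e_le hA.g_le i p.1 h0 j p.2
      simp_rw [Finset.mul_sum] at this
      simpa [h1, h2] using this

end Receiver2

/-- One-shot Han-Kobayashi random coding bound, for a fixed value of the time-sharing variable: some
pair of superposition codebooks, with messages embedded by `φ1`, `φ2` as (cloud, satellite) indices
and receivers searching for a pair that passes their test, errs with probability at most the sum of
the miss probabilities and of the union bounds. -/
theorem one_shot {W1 X1 W2 X2 Y1 Y2 : Type*} [Fintype W1] [Fintype X1] [Fintype W2] [Fintype X2]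
    [Fintype Y1] [Fintype Y2] (T1 S1 T2 S2 : Type) [Fintype T1] [DecidableEq T1] [Fintype S1]
    [DecidableEq S1] [Fintype T2] [DecidableEq T2] [Fintype S2] [DecidableEq S2]
    (pW1 : W1 → ℝ) (pX1 : W1 → X1 → ℝ) (pW2 : W2 → ℝ) (pX2 : W2 → X2 → ℝ)
    (ch : X1 → X2 → Y1 → Y2 → ℝ)
    (hW1 : IsPmf pW1) (hX1 : ∀ w, IsPmf (pX1 w)) (hW2 : IsPmf pW2) (hX2 : ∀ w, IsPmf (pX2 w))
    (hch0 : ∀ x1 x2 y1 y2, 0 ≤ ch x1 x2 y1 y2) (hch1 : ∀ x1 x2, ∑ y1, ∑ y2, ch x1 x2 y1 y2 = 1)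
    (A1 : W1 → X1 → W2 → Y1 → Prop) (a1 e1 d1 g1 : ℝ)
    (hA1 : IsTest pW1 pX1 pW2 (kV pX2 fun x1 x2 y1 => ∑ y2, ch x1 x2 y1 y2) A1 a1 e1 d1 g1)
    (A2 : W2 → X2 → W1 → Y2 → Prop) (a2 e2 d2 g2 : ℝ)
    (hA2 : IsTest pW2 pX2 pW1 (kV pX1 fun x2 x1 y2 => ∑ y1, ch x1 x2 y1 y2) A2 a2 e2 d2 g2)
    (M1 M2 : ℕ) (hM1 : 0 < M1) (hM2 : 0 < M2)
    (φ1 : Fin M1 → T1 × S1) (hφ1 : Function.Injective φ1)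
    (φ2 : Fin M2 → T2 × S2) (hφ2 : Function.Injective φ2) :
    ∃ (e1' : Fin M1 → X1) (e2' : Fin M2 → X2) (dec1 : Y1 → Fin M1) (dec2 : Y2 → Fin M2),
      (1 / ((M1 : ℝ) * (M2 : ℝ))) * ∑ m1 : Fin M1, ∑ m2 : Fin M2, ∑ y1, ∑ y2,
        (if dec1 y1 ≠ m1 ∨ dec2 y2 ≠ m2 then ch (e1' m1) (e2' m2) y1 y2 else 0) ≤
      (missP pW1 pX1 pW2 (kV pX2 fun x1 x2 y1 => ∑ y2, ch x1 x2 y1 y2) A1 +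
        wrongB (Fintype.card T1) (Fintype.card S1) (Fintype.card T2) a1 e1 d1 g1) +
      (missP pW2 pX2 pW1 (kV pX1 fun x2 x1 y2 => ∑ y1, ch x1 x2 y1 y2) A2 +
        wrongB (Fintype.card T2) (Fintype.card S2) (Fintype.card T1) a2 e2 d2 g2) := by
  classical
  set ch1 : X1 → X2 → Y1 → ℝ := fun x1 x2 y1 => ∑ y2, ch x1 x2 y1 y2 with hch1d
  set ch2 : X2 → X1 → Y2 → ℝ := fun x2 x1 y2 => ∑ y1, ch x1 x2 y1 y2 with hch2d
  have hc1 : ∀ x x', IsPmf (ch1 x x') := fun x x' =>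
    ⟨fun y => Finset.sum_nonneg fun _ _ => hch0 _ _ _ _, hch1 x x'⟩
  have hc2 : ∀ x x', IsPmf (ch2 x x') := fun x x' =>
    ⟨fun y => Finset.sum_nonneg fun _ _ => hch0 _ _ _ _, by
      rw [← hch1 x' x, Finset.sum_comm]⟩
  set B1 := missP pW1 pX1 pW2 (kV pX2 ch1) A1 +
        wrongB (Fintype.card T1) (Fintype.card S1) (Fintype.card T2) a1 e1 d1 g1
  set B2 := missP pW2 pX2 pW1 (kV pX1 ch2) A2 +
        wrongB (Fintype.card T2) (Fintype.card S2) (Fintype.card T1) a2 e2 d2 g2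
  have hM : (0 : ℝ) < (M1 : ℝ) * M2 := by positivity
  let μ : ((T1 → W1) × (T1 × S1 → X1)) × ((T2 → W2) × (T2 × S2 → X2)) → ℝ :=
    fun c => bookW pW1 pX1 c.1 * bookW pW2 pX2 c.2
  let E1 := fun (c : ((T1 → W1) × (T1 × S1 → X1)) × ((T2 → W2) × (T2 × S2 → X2))) i j =>
    ∑ y, ch1 (c.1.2 i) (c.2.2 j) y * failures A1 c.1 c.2.1 i j.1 y
  let E2 := fun (c : ((T1 → W1) × (T1 × S1 → X1)) × ((T2 → W2) × (T2 × S2 → X2))) i j =>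
    ∑ y, ch2 (c.2.2 j) (c.1.2 i) y * failures A2 c.2 c.1.1 j i.1 y
  have hE1 : ∀ i j, ∑ c, μ c * E1 c i j ≤ B1 := by
    intro i j
    have h := rx_err_le pW1 pX1 pW2 pX2 ch1 hW1 hX1 hW2 hX2 hc1 A1 a1 e1 d1 g1 hA1 i j
    rw [Fintype.sum_prod_type]
    simpa only [μ, E1, mul_assoc, ← Finset.mul_sum] using h
  have hE2 : ∀ i j, ∑ c, μ c * E2 c i j ≤ B2 := by
    intro i j
    have h := rx_err_le pW2 pX2 pW1 pX1 ch2 hW2 hX2 hW1 hX1 hc2 A2 a2 e2 d2 g2 hA2 j i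
    rw [Fintype.sum_prod_type_right]
    have : ∀ c, μ c = bookW pW2 pX2 c.2 * bookW pW1 pX1 c.1 := fun c => mul_comm _ _
    simpa only [this, E2, mul_assoc, ← Finset.mul_sum] using h
  obtain ⟨c, hc⟩ := exists_le_of_avg μ
    (fun c => (1 / ((M1 : ℝ) * (M2 : ℝ))) * ∑ m1 : Fin M1, ∑ m2 : Fin M2,
      (E1 c (φ1 m1) (φ2 m2) + E2 c (φ1 m1) (φ2 m2))) (B1 + B2)
    (fun c => mul_nonneg (bookW_nonneg _ _ hW1.1 (fun w => (hX1 w).1) _)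
      (bookW_nonneg _ _ hW2.1 (fun w => (hX2 w).1) _))
    (by
      rw [Fintype.sum_prod_type]
      simp only [μ, ← Finset.mul_sum, bookW_sum pW2 pX2 hW2.2 (fun w => (hX2 w).2),
        bookW_sum pW1 pX1 hW1.2 (fun w => (hX1 w).2), mul_one])
    (by
      have : ∀ c, μ c * ((1 / ((M1 : ℝ) * (M2 : ℝ))) * ∑ m1 : Fin M1, ∑ m2 : Fin M2,
          (E1 c (φ1 m1) (φ2 m2) + E2 c (φ1 m1) (φ2 m2))) = (1 / ((M1 : ℝ) * (M2 : ℝ))) *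
          ∑ m1 : Fin M1, ∑ m2 : Fin M2,
          (μ c * E1 c (φ1 m1) (φ2 m2) + μ c * E2 c (φ1 m1) (φ2 m2)) := by
        intro c
        rw [mul_left_comm]
        simp only [Finset.mul_sum, mul_add]
      simp_rw [this]
      rw [← Finset.mul_sum, Finset.sum_comm]
      simp_rw [Finset.sum_comm (s := (Finset.univ : Finset (((T1 → W1) × (T1 × S1 → X1)) ×
        ((T2 → W2) × (T2 × S2 → X2))))) (t := (Finset.univ : Finset (Fin M2))),
        Finset.sum_add_distrib (s := (Finset.univ : Finset (((T1 → W1) × (T1 × S1 → X1)) ×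
        ((T2 → W2) × (T2 × S2 → X2)))))]
      calc _ ≤ (1 / ((M1 : ℝ) * (M2 : ℝ))) * ∑ m1 : Fin M1, ∑ m2 : Fin M2, (B1 + B2) := by
            refine mul_le_mul_of_nonneg_left (Finset.sum_le_sum fun m1 _ =>
              Finset.sum_le_sum fun m2 _ => add_le_add (hE1 _ _) (hE2 _ _)) (by positivity)
        _ = B1 + B2 := by
            simp only [Finset.sum_const, Finset.card_univ, Fintype.card_fin, nsmul_eq_mul]
            field_simp
        _ ≤ B1 + B2 := le_rfl)
  have : Nonempty (Fin M1) := ⟨⟨0, hM1⟩⟩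
  have : Nonempty (Fin M2) := ⟨⟨0, hM2⟩⟩
  -- each receiver outputs some message with a codeword that passes the test
  let P1 : Y1 → Fin M1 → Prop := fun y m => ∃ t, A1 (c.1.1 (φ1 m).1) (c.1.2 (φ1 m)) (c.2.1 t) y
  let P2 : Y2 → Fin M2 → Prop := fun y m => ∃ t, A2 (c.2.1 (φ2 m).1) (c.2.2 (φ2 m)) (c.1.1 t) y
  let dec1 : Y1 → Fin M1 := fun y => Classical.epsilon (P1 y)
  let dec2 : Y2 → Fin M2 := fun y => Classical.epsilon (P2 y)
  have hd1 : ∀ y m j, (if dec1 y ≠ m then (1 : ℝ) else 0) ≤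
      failures A1 c.1 c.2.1 (φ1 m) j y := by
    intro y m j
    have hnn : ∀ p : (T1 × S1) × T2, (0 : ℝ) ≤ (if p.1 = φ1 m then 0 else
      if A1 (c.1.1 p.1.1) (c.1.2 p.1) (c.2.1 p.2) y then 1 else 0) := by
      intro p; split_ifs <;> norm_num
    unfold failures
    have hs := Finset.sum_nonneg fun p (_ : p ∈ Finset.univ) => hnn p
    by_cases hA : A1 (c.1.1 (φ1 m).1) (c.1.2 (φ1 m)) (c.2.1 j) y
    · rw [if_pos hA, zero_add]
      split_ifs with hne
      · obtain ⟨t, ht⟩ : P1 y (dec1 y) := Classical.epsilon_spec (p := P1 y) ⟨m, j, hA⟩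
        refine le_trans ?_ (Finset.single_le_sum (fun p _ => hnn p)
          (Finset.mem_univ (φ1 (dec1 y), t)))
        simp [ht, hφ1.eq_iff, hne]
      · exact hs
    · rw [if_neg hA]
      have : (if dec1 y ≠ m then (1 : ℝ) else 0) ≤ 1 := by split_ifs <;> norm_num
      linarith
  have hd2 : ∀ y m j, (if dec2 y ≠ m then (1 : ℝ) else 0) ≤
      failures A2 c.2 c.1.1 (φ2 m) j y := by
    intro y m j
    have hnn : ∀ p : (T2 × S2) × T1, (0 : ℝ) ≤ (if p.1 = φ2 m then 0 else
      if A2 (c.2.1 p.1.1) (c.2.2 p.1) (c.1.1 p.2) y then 1 else 0) := by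
      intro p; split_ifs <;> norm_num
    unfold failures
    have hs := Finset.sum_nonneg fun p (_ : p ∈ Finset.univ) => hnn p
    by_cases hA : A2 (c.2.1 (φ2 m).1) (c.2.2 (φ2 m)) (c.1.1 j) y
    · rw [if_pos hA, zero_add]
      split_ifs with hne
      · obtain ⟨t, ht⟩ : P2 y (dec2 y) := Classical.epsilon_spec (p := P2 y) ⟨m, j, hA⟩
        refine le_trans ?_ (Finset.single_le_sum (fun p _ => hnn p)
          (Finset.mem_univ (φ2 (dec2 y), t)))
        simp [ht, hφ2.eq_iff, hne]
      · exact hs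
    · rw [if_neg hA]
      have : (if dec2 y ≠ m then (1 : ℝ) else 0) ≤ 1 := by split_ifs <;> norm_num
      linarith
  refine ⟨fun m => c.1.2 (φ1 m), fun m => c.2.2 (φ2 m), dec1, dec2, le_trans ?_ hc⟩
  refine mul_le_mul_of_nonneg_left (Finset.sum_le_sum fun m1 _ => Finset.sum_le_sum fun m2 _ => ?_)
    (by positivity)
  have e1eq : E1 c (φ1 m1) (φ2 m2) = ∑ y1, ∑ y2, ch (c.1.2 (φ1 m1)) (c.2.2 (φ2 m2)) y1 y2 *
      failures A1 c.1 c.2.1 (φ1 m1) (φ2 m2).1 y1 := by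
    simp only [E1, ch1, Finset.sum_mul]
  have e2eq : E2 c (φ1 m1) (φ2 m2) = ∑ y1, ∑ y2, ch (c.1.2 (φ1 m1)) (c.2.2 (φ2 m2)) y1 y2 *
      failures A2 c.2 c.1.1 (φ2 m2) (φ1 m1).1 y2 := by
    rw [Finset.sum_comm]
    simp only [E2, ch2, Finset.sum_mul]
  rw [e1eq, e2eq, ← Finset.sum_add_distrib]
  refine Finset.sum_le_sum fun y1 _ => ?_
  rw [← Finset.sum_add_distrib]
  refine Finset.sum_le_sum fun y2 _ => ?_
  rw [← mul_add]
  have hind : (if dec1 y1 ≠ m1 ∨ dec2 y2 ≠ m2 then (1 : ℝ) else 0) ≤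
      (if dec1 y1 ≠ m1 then 1 else 0) + (if dec2 y2 ≠ m2 then 1 else 0) := by
    by_cases h1 : dec1 y1 = m1 <;> by_cases h2 : dec2 y2 = m2 <;> simp [h1, h2]
  calc (if dec1 y1 ≠ m1 ∨ dec2 y2 ≠ m2 then ch (c.1.2 (φ1 m1)) (c.2.2 (φ2 m2)) y1 y2 else 0)
      = ch (c.1.2 (φ1 m1)) (c.2.2 (φ2 m2)) y1 y2 *
        (if dec1 y1 ≠ m1 ∨ dec2 y2 ≠ m2 then (1 : ℝ) else 0) := by simp
    _ ≤ _ := mul_le_mul_of_nonneg_left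
        (hind.trans (add_le_add (hd1 y1 m1 _) (hd2 y2 m2 _))) (hch0 _ _ _ _)

/-! ### Memoryless extensions and the Chernoff bound -/

/-- Chernoff: an exponential moment below one exists on the unlikely side of the mean. -/
theorem exists_exp_moment_lt_one {Ω : Type*} [Fintype Ω] (r f : Ω → ℝ) (hr : IsPmf r) (θ : ℝ)
    (hθ : θ < ∑ ω, r ω * f ω) : ∃ l : ℝ, 0 < l ∧ ∑ ω, r ω * Real.exp (l * (θ - f ω)) < 1 := by
  set s := ∑ ω, r ω * (θ - f ω) with hs
  set v := ∑ ω, r ω * (θ - f ω) ^ 2 with hv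
  have hsneg : s < 0 := by
    rw [hs]
    simp only [mul_sub, Finset.sum_sub_distrib, ← Finset.sum_mul, hr.2]
    linarith
  have hv0 : 0 ≤ v := Finset.sum_nonneg fun ω _ => mul_nonneg (hr.1 ω) (sq_nonneg _)
  obtain ⟨C, hC⟩ : ∃ C : ℝ, ∀ ω, |θ - f ω| ≤ C := by
    refine ⟨∑ ω, |θ - f ω|, fun ω => ?_⟩
    exact Finset.single_le_sum (f := fun ω => |θ - f ω|) (fun _ _ => abs_nonneg _)
      (Finset.mem_univ ω)
  have hCpos : 0 < |C| + 1 := by positivity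
  -- small enough for `exp x ≤ 1 + x + x²`, and for the linear term to dominate
  let l := min (1 / (|C| + 1)) (-s / (2 * (v + 1)))
  have hl : 0 < l := lt_min (by positivity) (div_pos (by linarith) (by linarith))
  refine ⟨l, hl, ?_⟩
  have hexp : ∀ ω, Real.exp (l * (θ - f ω)) ≤
      1 + l * (θ - f ω) + l ^ 2 * (θ - f ω) ^ 2 := by
    intro ω
    have habs : |l * (θ - f ω)| ≤ 1 := by
      rw [abs_mul, abs_of_pos hl]
      calc l * |θ - f ω| ≤ 1 / (|C| + 1) * (|C| + 1) :=
            mul_le_mul (min_le_left _ _) (by linarith [hC ω, le_abs_self C]) (abs_nonneg _)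
              (by positivity)
        _ = 1 := by field_simp
    have := Real.abs_exp_sub_one_sub_id_le habs
    have := (abs_le.1 this).2
    nlinarith [this]
  calc ∑ ω, r ω * Real.exp (l * (θ - f ω))
      ≤ ∑ ω, r ω * (1 + l * (θ - f ω) + l ^ 2 * (θ - f ω) ^ 2) :=
        Finset.sum_le_sum fun ω _ => mul_le_mul_of_nonneg_left (hexp ω) (hr.1 ω)
    _ = 1 + l * s + l ^ 2 * v := by
        rw [hs, hv]
        simp only [mul_add, Finset.sum_add_distrib, mul_one, hr.2, Finset.mul_sum]
        congr 1
        · congr 1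
          exact Finset.sum_congr rfl fun _ _ => by ring
        · exact Finset.sum_congr rfl fun _ _ => by ring
    _ < 1 := by
        have h1 : l * (2 * (v + 1)) ≤ -s := by
          have := min_le_right (1 / (|C| + 1)) (-s / (2 * (v + 1)))
          rwa [le_div_iff₀ (by linarith)] at this
        have : l * v < -s := by nlinarith
        nlinarith

section NLetter
variable {Q W1 X1 W2 Y : Type*} [Fintype Q] [Fintype W1] [Fintype X1] [Fintype W2] [Fintype Y]

/-- Law of `(q, w1, x1, w2, y)` seen by one receiver. -/
noncomputable def rl (pQ : Q → ℝ) (pW1 : Q → W1 → ℝ) (pX1 : W1 → Q → X1 → ℝ) (pW2 : Q → W2 → ℝ)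
    (V : Q → X1 → W2 → Y → ℝ) (ω : Q × W1 × X1 × W2 × Y) : ℝ :=
  pQ ω.1 * pW1 ω.1 ω.2.1 * pX1 ω.2.1 ω.1 ω.2.2.1 * pW2 ω.1 ω.2.2.2.1 *
    V ω.1 ω.2.2.1 ω.2.2.2.1 ω.2.2.2.2

/-- Mean of the information density `log (V / U)` (in bits). -/
noncomputable def Iof (pQ : Q → ℝ) (pW1 : Q → W1 → ℝ) (pX1 : W1 → Q → X1 → ℝ) (pW2 : Q → W2 → ℝ)
    (V : Q → X1 → W2 → Y → ℝ) (U : Q → W1 → W2 → Y → ℝ) : ℝ :=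
  ∑ ω : Q × W1 × X1 × W2 × Y, rl pQ pW1 pX1 pW2 V ω *
    Real.logb 2 (V ω.1 ω.2.2.1 ω.2.2.2.1 ω.2.2.2.2 / U ω.1 ω.2.1 ω.2.2.2.1 ω.2.2.2.2)

/-- `n`-letter cloud-centre law for a given time-sharing sequence. -/
noncomputable def nW {W : Type*} (pW : Q → W → ℝ) {n : ℕ} (q : Fin n → Q) (w : Fin n → W) : ℝ :=
  ∏ i, pW (q i) (w i)

/-- `n`-letter satellite law for a given time-sharing sequence. -/
noncomputable def nX {W X : Type*} (pX : W → Q → X → ℝ) {n : ℕ} (q : Fin n → Q) (w : Fin n → W)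
    (x : Fin n → X) : ℝ := ∏ i, pX (w i) (q i) (x i)

/-- `n`-letter averaged channel for a given time-sharing sequence. -/
noncomputable def nV {X W Y : Type*} (V : Q → X → W → Y → ℝ) {n : ℕ} (q : Fin n → Q)
    (x : Fin n → X) (w : Fin n → W) (y : Fin n → Y) : ℝ := ∏ i, V (q i) (x i) (w i) (y i)

theorem isPmf_pi {ι α : Type*} [Fintype ι] [DecidableEq ι] [Fintype α] (μ : ι → α → ℝ)
    (h : ∀ i, IsPmf (μ i)) : IsPmf (fun f : ι → α => ∏ i, μ i (f i)) :=
  ⟨fun f => Finset.prod_nonneg fun i _ => (h i).1 _, by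
    rw [sum_pi_prod]
    exact Finset.prod_eq_one fun i _ => (h i).2⟩

omit [Fintype Q] [Fintype W1] [Fintype W2] [Fintype Y] in
theorem kA_n (pX1 : W1 → Q → X1 → ℝ) (V : Q → X1 → W2 → Y → ℝ) {n : ℕ} (q : Fin n → Q)
    (w1 : Fin n → W1) (w2 : Fin n → W2) (y : Fin n → Y) :
    kA (nX pX1 q) (nV V q) w1 w2 y =
      ∏ i, kA (fun w x => pX1 w (q i) x) (V (q i)) (w1 i) (w2 i) (y i) := by
  simp only [kA, nX, nV, ← Finset.prod_mul_distrib]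
  exact sum_pi_prod (fun i a => pX1 (w1 i) (q i) a * V (q i) a (w2 i) (y i))

omit [Fintype Q] [Fintype W2] [Fintype Y] in
theorem kD_n (pW1 : Q → W1 → ℝ) (pX1 : W1 → Q → X1 → ℝ) (V : Q → X1 → W2 → Y → ℝ) {n : ℕ}
    (q : Fin n → Q) (w2 : Fin n → W2) (y : Fin n → Y) :
    kD (nW pW1 q) (nX pX1 q) (nV V q) w2 y =
      ∏ i, kD (pW1 (q i)) (fun w x => pX1 w (q i) x) (V (q i)) (w2 i) (y i) := by
  simp only [kD, kA_n, nW, ← Finset.prod_mul_distrib]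
  exact sum_pi_prod (fun i a => pW1 (q i) a *
    kA (fun w x => pX1 w (q i) x) (V (q i)) a (w2 i) (y i))

omit [Fintype Q] [Fintype W1] [Fintype Y] in
theorem kE_n (pX1 : W1 → Q → X1 → ℝ) (pW2 : Q → W2 → ℝ) (V : Q → X1 → W2 → Y → ℝ) {n : ℕ}
    (q : Fin n → Q) (w1 : Fin n → W1) (y : Fin n → Y) :
    kE (nX pX1 q) (nW pW2 q) (nV V q) w1 y =
      ∏ i, kE (fun w x => pX1 w (q i) x) (pW2 (q i)) (V (q i)) (w1 i) (y i) := by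
  simp only [kE, nX, nW, nV, ← Finset.prod_mul_distrib]
  have h : ∀ x : Fin n → X1, ∑ w2 : Fin n → W2,
      ∏ i, pW2 (q i) (w2 i) * V (q i) (x i) (w2 i) (y i) =
      ∏ i, ∑ w2, pW2 (q i) w2 * V (q i) (x i) w2 (y i) := fun x =>
    sum_pi_prod (fun i a => pW2 (q i) a * V (q i) (x i) a (y i))
  simp_rw [h, ← Finset.prod_mul_distrib]
  exact sum_pi_prod (fun i a => pX1 (w1 i) (q i) a *
    ∑ w2, pW2 (q i) w2 * V (q i) a w2 (y i))

omit [Fintype Q] [Fintype Y] in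
theorem kG_n (pW1 : Q → W1 → ℝ) (pX1 : W1 → Q → X1 → ℝ) (pW2 : Q → W2 → ℝ)
    (V : Q → X1 → W2 → Y → ℝ) {n : ℕ} (q : Fin n → Q) (y : Fin n → Y) :
    kG (nW pW1 q) (nX pX1 q) (nW pW2 q) (nV V q) y =
      ∏ i, kG (pW1 (q i)) (fun w x => pX1 w (q i) x) (pW2 (q i)) (V (q i)) (y i) := by
  simp only [kG, kE_n]
  simp only [nW, ← Finset.prod_mul_distrib]
  exact sum_pi_prod (fun i a => pW1 (q i) a *
    kE (fun w x => pX1 w (q i) x) (pW2 (q i)) (V (q i)) a (y i))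

/-- For a threshold below the mean information density, the average over the time-sharing sequence
of the probability that the transmitted triple fails the likelihood test decays exponentially. -/
theorem miss_decay (pQ : Q → ℝ) (pW1 : Q → W1 → ℝ) (pX1 : W1 → Q → X1 → ℝ) (pW2 : Q → W2 → ℝ)
    (V : Q → X1 → W2 → Y → ℝ) (U : Q → W1 → W2 → Y → ℝ) (hr : IsPmf (rl pQ pW1 pX1 pW2 V))
    (hV0 : ∀ q x w y, 0 ≤ V q x w y) (hU0 : ∀ q w w' y, 0 ≤ U q w w' y)
    (hU : ∀ q w1 x1 w2 y, rl pQ pW1 pX1 pW2 V (q, w1, x1, w2, y) ≠ 0 → U q w1 w2 y ≠ 0)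
    (θ : ℝ) (hθ : θ < Iof pQ pW1 pX1 pW2 V U) :
    ∃ ρ : ℝ, 0 ≤ ρ ∧ ρ < 1 ∧ ∀ n : ℕ, ∑ q : Fin n → Q, (∏ i, pQ (q i)) *
      missP (nW pW1 q) (nX pX1 q) (nW pW2 q) (nV V q)
        (fun w1 x1 w2 y => ∏ i, U (q i) (w1 i) (w2 i) (y i) ≤
          (2 : ℝ) ^ (-((n : ℝ) * θ)) * nV V q x1 w2 y) ≤ ρ ^ n := by
  classical
  obtain ⟨l, hl, hlt⟩ := exists_exp_moment_lt_one _ _ hr θ hθ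
  set h : Q × W1 × X1 × W2 × Y → ℝ := fun ω => Real.exp (l * (θ -
    Real.logb 2 (V ω.1 ω.2.2.1 ω.2.2.2.1 ω.2.2.2.2 / U ω.1 ω.2.1 ω.2.2.2.1 ω.2.2.2.2))) with hh
  refine ⟨∑ ω, rl pQ pW1 pX1 pW2 V ω * h ω, Finset.sum_nonneg fun ω _ =>
    mul_nonneg (hr.1 ω) (Real.exp_pos _).le, hlt, fun n => ?_⟩
  have hpow : (∑ ω, rl pQ pW1 pX1 pW2 V ω * h ω) ^ n = ∑ q : Fin n → Q, ∑ w1 : Fin n → W1,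
      ∑ x1 : Fin n → X1, ∑ w2 : Fin n → W2, ∑ y : Fin n → Y,
        ∏ i, (rl pQ pW1 pX1 pW2 V (q i, w1 i, x1 i, w2 i, y i) *
          h (q i, w1 i, x1 i, w2 i, y i)) := by
    have s1 : ∀ (q : Fin n → Q) (w1 : Fin n → W1) (x1 : Fin n → X1) (w2 : Fin n → W2), _ :=
      fun q w1 x1 w2 => sum_pi_prod (fun i y => rl pQ pW1 pX1 pW2 V (q i, w1 i, x1 i, w2 i, y) *
          h (q i, w1 i, x1 i, w2 i, y))
    simp_rw [s1]
    have s2 : ∀ (q : Fin n → Q) (w1 : Fin n → W1) (x1 : Fin n → X1), _ :=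
      fun q w1 x1 => sum_pi_prod (fun i w2 => ∑ y, rl pQ pW1 pX1 pW2 V (q i, w1 i, x1 i, w2, y) *
          h (q i, w1 i, x1 i, w2, y))
    simp_rw [s2]
    have s3 : ∀ (q : Fin n → Q) (w1 : Fin n → W1), _ :=
      fun q w1 => sum_pi_prod (fun i x1 => ∑ w2, ∑ y, rl pQ pW1 pX1 pW2 V
        (q i, w1 i, x1, w2, y) * h (q i, w1 i, x1, w2, y))
    simp_rw [s3]
    have s4 : ∀ (q : Fin n → Q), _ :=
      fun q => sum_pi_prod (fun i w1 => ∑ x1, ∑ w2, ∑ y, rl pQ pW1 pX1 pW2 V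
        (q i, w1, x1, w2, y) * h (q i, w1, x1, w2, y))
    simp_rw [s4]
    rw [sum_pi_prod (fun (i : Fin n) q => ∑ w1, ∑ x1, ∑ w2, ∑ y, rl pQ pW1 pX1 pW2 V
        (q, w1, x1, w2, y) * h (q, w1, x1, w2, y))]
    simp [Fintype.sum_prod_type]
  rw [hpow]
  simp only [missP, Finset.mul_sum]
  refine Finset.sum_le_sum fun q _ => Finset.sum_le_sum fun w1 _ => Finset.sum_le_sum fun x1 _ =>
    Finset.sum_le_sum fun w2 _ => Finset.sum_le_sum fun y _ => ?_
  have hprod : ∀ c : ℝ, (∏ i, pQ (q i)) * (nW pW1 q w1 * (nX pX1 q w1 x1 * (nW pW2 q w2 *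
      (nV V q x1 w2 y * c)))) = (∏ i, rl pQ pW1 pX1 pW2 V (q i, w1 i, x1 i, w2 i, y i)) * c := by
    intro c
    simp only [nW, nX, nV, rl, Finset.prod_mul_distrib]
    ring
  rw [hprod, Finset.prod_mul_distrib]
  have hP0 : 0 ≤ ∏ i, rl pQ pW1 pX1 pW2 V (q i, w1 i, x1 i, w2 i, y i) :=
    Finset.prod_nonneg fun i _ => hr.1 _
  by_cases hz : ∃ i, rl pQ pW1 pX1 pW2 V (q i, w1 i, x1 i, w2 i, y i) = 0
  · obtain ⟨i, hi⟩ := hz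
    rw [Finset.prod_eq_zero (Finset.mem_univ i) hi]
    simp
  · push Not at hz
    refine mul_le_mul_of_nonneg_left ?_ hP0
    split_ifs with hA
    · exact Finset.prod_nonneg fun i _ => (Real.exp_pos _).le
    · have hUp : ∀ i, 0 < U (q i) (w1 i) (w2 i) (y i) := fun i =>
        lt_of_le_of_ne (hU0 _ _ _ _) (Ne.symm (hU _ _ _ _ _ (hz i)))
      have hVp : ∀ i, 0 < V (q i) (x1 i) (w2 i) (y i) := by
        intro i
        refine lt_of_le_of_ne (hV0 _ _ _ _) (Ne.symm fun h0 => hz i ?_)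
        simp [rl, h0]
      rw [not_le] at hA
      have hVprod : 0 < nV V q x1 w2 y := Finset.prod_pos fun i _ => hVp i
      have hlog := Real.logb_lt_logb (b := 2) (by norm_num) (by positivity) hA
      rw [Real.logb_mul (by positivity) hVprod.ne', Real.logb_rpow (by norm_num) (by norm_num),
        nV, Real.logb_prod _ _ (fun i _ => (hVp i).ne'),
        Real.logb_prod _ _ (fun i _ => (hUp i).ne')] at hlog
      simp only [hh]
      rw [← Real.exp_sum]
      refine Real.one_le_exp ?_
      rw [← Finset.mul_sum]
      refine mul_nonneg hl.le ?_
      simp only [Finset.sum_sub_distrib]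
      have : ∀ i, Real.logb 2 (V (q i) (x1 i) (w2 i) (y i) / U (q i) (w1 i) (w2 i) (y i)) =
        Real.logb 2 (V (q i) (x1 i) (w2 i) (y i)) - Real.logb 2 (U (q i) (w1 i) (w2 i) (y i)) :=
        fun i => Real.logb_div (hVp i).ne' (hUp i).ne'
      simp_rw [this]
      simp only [Finset.sum_sub_distrib, Finset.sum_const, Finset.card_univ, Fintype.card_fin,
        nsmul_eq_mul]
      linarith

end NLetter

/-! ### Rates and the coding theorem -/

section Asymptotics
open Filter Topology

/-- A competitor count `f n` that vanishes identically, or grows at a rate `s` below the information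
`θ`, is beaten by the threshold `2 ^ (-n θ')` for some `θ' < θ`. -/
theorem term_tendsto (f : ℕ → ℝ) (s θ : ℝ)
    (h : (∀ n, f n = 0) ∨ ((∀ n, 0 ≤ f n ∧ f n ≤ 2 * (2 : ℝ) ^ ((n : ℝ) * s)) ∧ s < θ)) :
    ∃ θ', θ' < θ ∧ Tendsto (fun n : ℕ => f n * (2 : ℝ) ^ (-((n : ℝ) * θ'))) atTop (𝓝 0) := by
  rcases h with h | ⟨h, hs⟩
  · exact ⟨θ - 1, by linarith, by simp [h]⟩
  · refine ⟨(s + θ) / 2, by linarith, ?_⟩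
    have hlim : Tendsto (fun n : ℕ => 2 * ((2 : ℝ) ^ (s - (s + θ) / 2)) ^ n) atTop (𝓝 0) := by
      have := (tendsto_pow_atTop_nhds_zero_of_lt_one (r := (2 : ℝ) ^ (s - (s + θ) / 2))
        (by positivity) (Real.rpow_lt_one_of_one_lt_of_neg (by norm_num) (by linarith))).const_mul
        (2 : ℝ)
      simpa using this
    refine squeeze_zero (fun n => mul_nonneg (h n).1 (by positivity)) (fun n => ?_) hlim
    calc f n * (2 : ℝ) ^ (-((n : ℝ) * ((s + θ) / 2)))
        ≤ 2 * (2 : ℝ) ^ ((n : ℝ) * s) * (2 : ℝ) ^ (-((n : ℝ) * ((s + θ) / 2))) :=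
          mul_le_mul_of_nonneg_right (h n).2 (by positivity)
      _ = 2 * ((2 : ℝ) ^ (s - (s + θ) / 2)) ^ n := by
          rw [mul_assoc, ← Real.rpow_add (by norm_num), ← Real.rpow_natCast,
            ← Real.rpow_mul (by norm_num)]
          congr 2
          ring

/-- Number of codewords at rate `x` and block length `n`. -/
noncomputable def Lc (x : ℝ) (n : ℕ) : ℕ := Nat.ceil ((2 : ℝ) ^ ((n : ℝ) * x))

theorem Lc_zero (n : ℕ) : Lc 0 n = 1 := by simp [Lc]

theorem Lc_sub_one_le (x : ℝ) (n : ℕ) : (Lc x n : ℝ) - 1 ≤ (2 : ℝ) ^ ((n : ℝ) * x) := by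
  have := Nat.ceil_lt_add_one (a := (2 : ℝ) ^ ((n : ℝ) * x)) (by positivity)
  rw [Lc]
  linarith

theorem one_le_Lc (x : ℝ) (n : ℕ) : (1 : ℝ) ≤ Lc x n := by
  have : 0 < Lc x n := Nat.ceil_pos.2 (by positivity)
  exact_mod_cast this

theorem Lc_le (x : ℝ) (hx : 0 ≤ x) (n : ℕ) : (Lc x n : ℝ) ≤ 2 * (2 : ℝ) ^ ((n : ℝ) * x) := by
  have h1 := Lc_sub_one_le x n
  have h2 : (1 : ℝ) ≤ (2 : ℝ) ^ ((n : ℝ) * x) :=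
    Real.one_le_rpow (by norm_num) (by positivity)
  linarith

/-- Decodability conditions at one receiver, for own cloud rate `T`, own satellite rate `S` and
interfering cloud rate `T'`. A condition is void when the codewords it concerns are unique. -/
def RateOK (T S T' a e d g : ℝ) : Prop :=
  (S = 0 ∨ S < a) ∧ (S = 0 ∨ T' = 0 ∨ S + T' < e) ∧ (T = 0 ∨ T + S < d) ∧
    (T = 0 ∨ T' = 0 ∨ T + S + T' < g)

theorem wrongB_tendsto (T S T' a e d g : ℝ) (hS : 0 ≤ S)
    (h : RateOK T S T' a e d g) : ∃ a' < a, ∃ e' < e, ∃ d' < d, ∃ g' < g,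
      Tendsto (fun n : ℕ => wrongB (Lc T n) (Lc S n) (Lc T' n) ((2 : ℝ) ^ (-((n : ℝ) * a')))
        ((2 : ℝ) ^ (-((n : ℝ) * e'))) ((2 : ℝ) ^ (-((n : ℝ) * d')))
        ((2 : ℝ) ^ (-((n : ℝ) * g')))) atTop (𝓝 0) := by
  obtain ⟨h1, h2, h3, h4⟩ := h
  have p0 : ∀ x (n : ℕ), 0 ≤ (Lc x n : ℝ) - 1 := fun x n => by linarith [one_le_Lc x n]
  have pp : ∀ x (n : ℕ), 0 < (2 : ℝ) ^ ((n : ℝ) * x) := fun x n => by positivity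
  obtain ⟨a', ha', ta⟩ := term_tendsto (fun n => (Lc S n : ℝ) - 1) S a (by
    rcases h1 with h | h
    · left; intro n; simp [h, Lc_zero]
    · exact .inr ⟨fun n => ⟨p0 _ _, by linarith [Lc_sub_one_le S n, pp S n]⟩, h⟩)
  obtain ⟨e', he', te⟩ := term_tendsto (fun n => ((Lc S n : ℝ) - 1) * ((Lc T' n : ℝ) - 1))
      (S + T') e (by
    rcases h2 with h | h | h
    · left; intro n; simp [h, Lc_zero]
    · left; intro n; simp [h, Lc_zero]
    · refine .inr ⟨fun n => ⟨mul_nonneg (p0 _ _) (p0 _ _), ?_⟩, h⟩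
      rw [mul_add, Real.rpow_add (by norm_num)]
      have := mul_le_mul (Lc_sub_one_le S n) (Lc_sub_one_le T' n) (p0 _ _) (pp _ _).le
      linarith [mul_pos (pp S n) (pp T' n)])
  obtain ⟨d', hd', td⟩ := term_tendsto (fun n => ((Lc T n : ℝ) - 1) * Lc S n) (T + S) d (by
    rcases h3 with h | h
    · left; intro n; simp [h, Lc_zero]
    · refine .inr ⟨fun n => ⟨mul_nonneg (p0 _ _) (Nat.cast_nonneg _), ?_⟩, h⟩
      rw [mul_add, Real.rpow_add (by norm_num)]
      have := mul_le_mul (Lc_sub_one_le T n) (Lc_le S hS n) (Nat.cast_nonneg _) (pp _ _).le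
      linarith [mul_pos (pp T n) (pp S n)])
  obtain ⟨g', hg', tg⟩ := term_tendsto
      (fun n => ((Lc T n : ℝ) - 1) * Lc S n * ((Lc T' n : ℝ) - 1)) (T + S + T') g (by
    rcases h4 with h | h | h
    · left; intro n; simp [h, Lc_zero]
    · left; intro n; simp [h, Lc_zero]
    · refine .inr ⟨fun n => ⟨mul_nonneg (mul_nonneg (p0 _ _) (Nat.cast_nonneg _)) (p0 _ _), ?_⟩, h⟩
      rw [mul_add, mul_add, Real.rpow_add (by norm_num), Real.rpow_add (by norm_num)]
      have h1 := mul_le_mul (Lc_sub_one_le T n) (Lc_le S hS n) (Nat.cast_nonneg _) (pp _ _).le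
      have h2 := mul_le_mul h1 (Lc_sub_one_le T' n) (p0 _ _) (by positivity)
      linarith)
  refine ⟨a', ha', e', he', d', hd', g', hg', ?_⟩
  have := ((ta.add te).add td).add tg
  simpa [wrongB] using this

end Asymptotics

section Coding
open Filter Topology

theorem missP_and {W1 X1 W2 Y : Type*} [Fintype W1] [Fintype X1] [Fintype W2] [Fintype Y]
    (pW1 : W1 → ℝ) (pX1 : W1 → X1 → ℝ) (pW2 : W2 → ℝ) (V : X1 → W2 → Y → ℝ)
    (hW1 : ∀ w, 0 ≤ pW1 w) (hX1 : ∀ w x, 0 ≤ pX1 w x) (hW2 : ∀ w, 0 ≤ pW2 w)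
    (hV : ∀ x w y, 0 ≤ V x w y) (A B : W1 → X1 → W2 → Y → Prop) :
    missP pW1 pX1 pW2 V (fun w1 x1 w2 y => A w1 x1 w2 y ∧ B w1 x1 w2 y) ≤
      missP pW1 pX1 pW2 V A + missP pW1 pX1 pW2 V B := by
  classical
  simp only [missP, ← Finset.sum_add_distrib, ← mul_add]
  refine Finset.sum_le_sum fun w1 _ => mul_le_mul_of_nonneg_left (Finset.sum_le_sum fun x1 _ =>
    mul_le_mul_of_nonneg_left (Finset.sum_le_sum fun w2 _ => mul_le_mul_of_nonneg_left
    (Finset.sum_le_sum fun y _ => mul_le_mul_of_nonneg_left ?_ (hV _ _ _)) (hW2 _)) (hX1 _ _))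
    (hW1 _)
  by_cases h1 : A w1 x1 w2 y <;> by_cases h2 : B w1 x1 w2 y <;> simp [h1, h2]

section Info
variable {Q W1 X1 W2 Y : Type*} [Fintype W1] [Fintype X1] [Fintype W2]

/-- `p(y | q, w1, w2)` -/
noncomputable def uA (pX1 : W1 → Q → X1 → ℝ) (V : Q → X1 → W2 → Y → ℝ) (q : Q) (w1 : W1) (w2 : W2)
    (y : Y) : ℝ := kA (fun w x => pX1 w q x) (V q) w1 w2 y

/-- `p(y | q, w1)` -/
noncomputable def uE (pX1 : W1 → Q → X1 → ℝ) (pW2 : Q → W2 → ℝ) (V : Q → X1 → W2 → Y → ℝ) (q : Q)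
    (w1 : W1) (_ : W2) (y : Y) : ℝ := kE (fun w x => pX1 w q x) (pW2 q) (V q) w1 y

/-- `p(y | q, w2)` -/
noncomputable def uD (pW1 : Q → W1 → ℝ) (pX1 : W1 → Q → X1 → ℝ) (V : Q → X1 → W2 → Y → ℝ) (q : Q)
    (_ : W1) (w2 : W2) (y : Y) : ℝ := kD (pW1 q) (fun w x => pX1 w q x) (V q) w2 y

/-- `p(y | q)` -/
noncomputable def uG (pW1 : Q → W1 → ℝ) (pX1 : W1 → Q → X1 → ℝ) (pW2 : Q → W2 → ℝ)
    (V : Q → X1 → W2 → Y → ℝ) (q : Q) (_ : W1) (_ : W2) (y : Y) : ℝ :=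
  kG (pW1 q) (fun w x => pX1 w q x) (pW2 q) (V q) y

end Info

section Rx
variable {Q W1 X1 W2 Y : Type*} [Fintype Q] [Fintype W1] [Fintype X1] [Fintype W2] [Fintype Y]
  (pQ : Q → ℝ) (pW1 : Q → W1 → ℝ) (pX1 : W1 → Q → X1 → ℝ) (pW2 : Q → W2 → ℝ)
  (V : Q → X1 → W2 → Y → ℝ) (hQ : IsPmf pQ) (hW1 : ∀ q, IsPmf (pW1 q))
  (hX1 : ∀ w q, IsPmf (pX1 w q)) (hW2 : ∀ q, IsPmf (pW2 q)) (hV : ∀ q x w, IsPmf (V q x w))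
include hQ hW1 hX1 hW2 hV

theorem rl_isPmf : IsPmf (rl pQ pW1 pX1 pW2 V) := by
  refine ⟨fun ω => ?_, ?_⟩
  · exact mul_nonneg (mul_nonneg (mul_nonneg (mul_nonneg (hQ.1 _) ((hW1 _).1 _))
      ((hX1 _ _).1 _)) ((hW2 _).1 _)) ((hV _ _ _).1 _)
  · simp [rl, Fintype.sum_prod_type, ← Finset.mul_sum, (hV _ _ _).2, (hW2 _).2, (hX1 _ _).2,
      (hW1 _).2, hQ.2]

theorem uA_nonneg (q : Q) (w1 : W1) (w2 : W2) (y : Y) : 0 ≤ uA pX1 V q w1 w2 y :=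
  Finset.sum_nonneg fun _ _ => mul_nonneg ((hX1 _ _).1 _) ((hV _ _ _).1 _)

theorem uE_nonneg (q : Q) (w1 : W1) (w2 : W2) (y : Y) : 0 ≤ uE pX1 pW2 V q w1 w2 y :=
  Finset.sum_nonneg fun _ _ => mul_nonneg ((hX1 _ _).1 _)
    (Finset.sum_nonneg fun _ _ => mul_nonneg ((hW2 _).1 _) ((hV _ _ _).1 _))

theorem uD_nonneg (q : Q) (w1 : W1) (w2 : W2) (y : Y) : 0 ≤ uD pW1 pX1 V q w1 w2 y :=
  Finset.sum_nonneg fun _ _ => mul_nonneg ((hW1 _).1 _)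
    (uA_nonneg pQ pW1 pX1 pW2 V hQ hW1 hX1 hW2 hV q _ w2 y)

theorem uG_nonneg (q : Q) (w1 : W1) (w2 : W2) (y : Y) : 0 ≤ uG pW1 pX1 pW2 V q w1 w2 y :=
  Finset.sum_nonneg fun _ _ => mul_nonneg ((hW1 _).1 _)
    (uE_nonneg pQ pW1 pX1 pW2 V hQ hW1 hX1 hW2 hV q _ w2 y)

omit hQ hW1 hX1 hW2 hV in
theorem pos_of_sum_term {α : Type*} [Fintype α] (f : α → ℝ) (a : α) (h0 : ∀ a, 0 ≤ f a)
    (ha : 0 < f a) : 0 < ∑ a, f a :=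
  Finset.sum_pos' (fun _ _ => h0 _) ⟨a, Finset.mem_univ _, ha⟩

/-- All averaged output laws are positive on the support of the joint law. -/
theorem u_pos (q : Q) (w1 : W1) (x1 : X1) (w2 : W2) (y : Y)
    (h : rl pQ pW1 pX1 pW2 V (q, w1, x1, w2, y) ≠ 0) :
    0 < V q x1 w2 y ∧ 0 < uA pX1 V q w1 w2 y ∧ 0 < uE pX1 pW2 V q w1 w2 y ∧
      0 < uD pW1 pX1 V q w1 w2 y ∧ 0 < uG pW1 pX1 pW2 V q w1 w2 y := by
  simp only [rl, ne_eq, mul_eq_zero, not_or] at h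
  obtain ⟨⟨⟨⟨h1, h2⟩, h3⟩, h4⟩, h5⟩ := h
  have p2 := lt_of_le_of_ne ((hW1 q).1 w1) (Ne.symm h2)
  have p3 := lt_of_le_of_ne ((hX1 w1 q).1 x1) (Ne.symm h3)
  have p4 := lt_of_le_of_ne ((hW2 q).1 w2) (Ne.symm h4)
  have p5 := lt_of_le_of_ne ((hV q x1 w2).1 y) (Ne.symm h5)
  have hA : 0 < uA pX1 V q w1 w2 y := pos_of_sum_term _ x1
    (fun _ => mul_nonneg ((hX1 _ _).1 _) ((hV _ _ _).1 _)) (mul_pos p3 p5)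
  have hE : 0 < uE pX1 pW2 V q w1 w2 y := pos_of_sum_term _ x1
    (fun _ => mul_nonneg ((hX1 _ _).1 _) (Finset.sum_nonneg fun _ _ =>
      mul_nonneg ((hW2 _).1 _) ((hV _ _ _).1 _))) (mul_pos p3 (pos_of_sum_term _ w2
      (fun _ => mul_nonneg ((hW2 _).1 _) ((hV _ _ _).1 _)) (mul_pos p4 p5)))
  exact ⟨p5, hA, hE, pos_of_sum_term _ w1 (fun _ => mul_nonneg ((hW1 _).1 _)
    (uA_nonneg pQ pW1 pX1 pW2 V hQ hW1 hX1 hW2 hV q _ w2 y)) (mul_pos p2 hA),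
    pos_of_sum_term _ w1 (fun _ => mul_nonneg ((hW1 _).1 _)
    (uE_nonneg pQ pW1 pX1 pW2 V hQ hW1 hX1 hW2 hV q _ w2 y)) (mul_pos p2 hE)⟩

/-- Under `RateOK`, one receiver has tests whose error bound, averaged over the time-sharing
sequence, vanishes. -/
theorem rx_decay (T S T' : ℝ) (hS : 0 ≤ S)
    (h : RateOK T S T' (Iof pQ pW1 pX1 pW2 V (uA pX1 V)) (Iof pQ pW1 pX1 pW2 V (uE pX1 pW2 V))
      (Iof pQ pW1 pX1 pW2 V (uD pW1 pX1 V)) (Iof pQ pW1 pX1 pW2 V (uG pW1 pX1 pW2 V))) :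
    ∃ (A : ∀ n : ℕ, (Fin n → Q) → (Fin n → W1) → (Fin n → X1) → (Fin n → W2) → (Fin n → Y) → Prop)
      (ba be bd bg : ℕ → ℝ) (F : ℕ → ℝ), Tendsto F atTop (𝓝 0) ∧
      (∀ n q, IsTest (nW pW1 q) (nX pX1 q) (nW pW2 q) (nV V q) (A n q)
        (ba n) (be n) (bd n) (bg n)) ∧
      ∀ n, ∑ q : Fin n → Q, (∏ i, pQ (q i)) *
        (missP (nW pW1 q) (nX pX1 q) (nW pW2 q) (nV V q) (A n q) +
          wrongB (Lc T n) (Lc S n) (Lc T' n) (ba n) (be n) (bd n) (bg n)) ≤ F n := by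
  obtain ⟨a', ha, e', he, d', hd, g', hg, hlim⟩ := wrongB_tendsto T S T' _ _ _ _ hS h
  have hr := rl_isPmf pQ pW1 pX1 pW2 V hQ hW1 hX1 hW2 hV
  have hV0 := fun q x w => (hV q x w).1
  have hup := u_pos pQ pW1 pX1 pW2 V hQ hW1 hX1 hW2 hV
  obtain ⟨ra, ra0, ra1, hra⟩ := miss_decay pQ pW1 pX1 pW2 V _ hr hV0
    (uA_nonneg pQ pW1 pX1 pW2 V hQ hW1 hX1 hW2 hV)
    (fun q w1 x1 w2 y h => (hup q w1 x1 w2 y h).2.1.ne') a' ha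
  obtain ⟨re, re0, re1, hre⟩ := miss_decay pQ pW1 pX1 pW2 V _ hr hV0
    (uE_nonneg pQ pW1 pX1 pW2 V hQ hW1 hX1 hW2 hV)
    (fun q w1 x1 w2 y h => (hup q w1 x1 w2 y h).2.2.1.ne') e' he
  obtain ⟨rd, rd0, rd1, hrd⟩ := miss_decay pQ pW1 pX1 pW2 V _ hr hV0
    (uD_nonneg pQ pW1 pX1 pW2 V hQ hW1 hX1 hW2 hV)
    (fun q w1 x1 w2 y h => (hup q w1 x1 w2 y h).2.2.2.1.ne') d' hd
  obtain ⟨rg, rg0, rg1, hrg⟩ := miss_decay pQ pW1 pX1 pW2 V _ hr hV0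
    (uG_nonneg pQ pW1 pX1 pW2 V hQ hW1 hX1 hW2 hV)
    (fun q w1 x1 w2 y h => (hup q w1 x1 w2 y h).2.2.2.2.ne') g' hg
  let b : ℝ → ℕ → ℝ := fun θ n => (2 : ℝ) ^ (-((n : ℝ) * θ))
  have hb : ∀ θ n, 0 ≤ b θ n := fun θ n => by positivity
  let Aa := fun (n : ℕ) (q : Fin n → Q) (w1 : Fin n → W1) (x1 : Fin n → X1) (w2 : Fin n → W2)
    (y : Fin n → Y) => ∏ i, uA pX1 V (q i) (w1 i) (w2 i) (y i) ≤ b a' n * nV V q x1 w2 y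
  let Ae := fun (n : ℕ) (q : Fin n → Q) (w1 : Fin n → W1) (x1 : Fin n → X1) (w2 : Fin n → W2)
    (y : Fin n → Y) => ∏ i, uE pX1 pW2 V (q i) (w1 i) (w2 i) (y i) ≤ b e' n * nV V q x1 w2 y
  let Ad := fun (n : ℕ) (q : Fin n → Q) (w1 : Fin n → W1) (x1 : Fin n → X1) (w2 : Fin n → W2)
    (y : Fin n → Y) => ∏ i, uD pW1 pX1 V (q i) (w1 i) (w2 i) (y i) ≤ b d' n * nV V q x1 w2 y
  let Ag := fun (n : ℕ) (q : Fin n → Q) (w1 : Fin n → W1) (x1 : Fin n → X1) (w2 : Fin n → W2)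
    (y : Fin n → Y) => ∏ i, uG pW1 pX1 pW2 V (q i) (w1 i) (w2 i) (y i) ≤ b g' n * nV V q x1 w2 y
  refine ⟨fun n q w1 x1 w2 y => Aa n q w1 x1 w2 y ∧ Ae n q w1 x1 w2 y ∧ Ad n q w1 x1 w2 y ∧
    Ag n q w1 x1 w2 y, b a', b e', b d', b g', fun n => (ra ^ n + (re ^ n + (rd ^ n + rg ^ n))) +
    wrongB (Lc T n) (Lc S n) (Lc T' n) (b a' n) (b e' n) (b d' n) (b g' n), ?_, ?_, ?_⟩
  · have t : ∀ r : ℝ, 0 ≤ r → r < 1 → Tendsto (fun n : ℕ => r ^ n) atTop (𝓝 0) :=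
      fun r h0 h1 => tendsto_pow_atTop_nhds_zero_of_lt_one h0 h1
    simpa using ((t ra ra0 ra1).add ((t re re0 re1).add ((t rd rd0 rd1).add (t rg rg0 rg1)))).add
      hlim
  · intro n q
    refine ⟨hb _ _, hb _ _, hb _ _, hb _ _, ?_, ?_, ?_, ?_⟩
    · intro w1 x1 w2 y h
      rw [kA_n]
      exact h.1
    · intro w1 x1 w2 y h
      rw [kE_n]
      exact h.2.1
    · intro w1 x1 w2 y h
      rw [kD_n]
      exact h.2.2.1
    · intro w1 x1 w2 y h
      rw [kG_n]
      exact h.2.2.2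
  · intro n
    have hq0 : ∀ q : Fin n → Q, 0 ≤ ∏ i, pQ (q i) := fun q =>
      Finset.prod_nonneg fun i _ => hQ.1 _
    have hq1 : ∑ q : Fin n → Q, ∏ i, pQ (q i) = 1 := (isPmf_pi (fun _ : Fin n => pQ)
      (fun _ => hQ)).2
    simp only [mul_add, Finset.sum_add_distrib]
    rw [← Finset.sum_mul, hq1, one_mul]
    refine add_le_add ?_ le_rfl
    have n1 : ∀ (q : Fin n → Q) w, 0 ≤ nW pW1 q w := fun q w =>
      Finset.prod_nonneg fun i _ => (hW1 _).1 _
    have n2 : ∀ (q : Fin n → Q) w x, 0 ≤ nX pX1 q w x := fun q w x =>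
      Finset.prod_nonneg fun i _ => (hX1 _ _).1 _
    have n3 : ∀ (q : Fin n → Q) w, 0 ≤ nW pW2 q w := fun q w =>
      Finset.prod_nonneg fun i _ => (hW2 _).1 _
    have n4 : ∀ (q : Fin n → Q) x w y, 0 ≤ nV V q x w y := fun q x w y =>
      Finset.prod_nonneg fun i _ => (hV _ _ _).1 _
    refine le_trans ?_ (add_le_add (hra n) (add_le_add (hre n) (add_le_add (hrd n) (hrg n))))
    simp only [← Finset.sum_add_distrib, ← mul_add]
    refine Finset.sum_le_sum fun q _ => mul_le_mul_of_nonneg_left ?_ (hq0 q)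
    have m := fun A B => missP_and (nW pW1 q) (nX pX1 q) (nW pW2 q) (nV V q) (n1 q) (n2 q) (n3 q)
      (n4 q) A B
    refine (m _ _).trans (add_le_add le_rfl ((m _ _).trans (add_le_add le_rfl (m _ _))))

end Rx

theorem kV_n {Q X1 W2 X2 Y1 Y2 : Type*} [Fintype X2] [Fintype Y2]
    (pX2 : W2 → Q → X2 → ℝ) (chan : X1 → X2 → Y1 → Y2 → ℝ) {n : ℕ} (q : Fin n → Q) :
    kV (nX pX2 q) (fun (x1 : Fin n → X1) (x2 : Fin n → X2) (y1 : Fin n → Y1) =>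
      ∑ y2 : Fin n → Y2, ∏ i, chan (x1 i) (x2 i) (y1 i) (y2 i)) =
    nV (fun q x1 w2 y1 => kV (fun w x => pX2 w q x) (fun x1 x2 y1 => ∑ y2, chan x1 x2 y1 y2)
      x1 w2 y1) q := by
  funext x1 w2 y1
  simp only [kV, nX, nV]
  have h : ∀ x2 : Fin n → X2, _ := fun x2 =>
    sum_pi_prod (fun i y2 => chan (x1 i) (x2 i) (y1 i) y2)
  simp_rw [h, ← Finset.prod_mul_distrib]
  exact sum_pi_prod (fun i a => pX2 (w2 i) (q i) a * ∑ y2, chan (x1 i) a (y1 i) y2)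

/-- Receiver-1 channel averaged over the interferer's satellite. -/
noncomputable def rxV {Q X1 W2 X2 Y1 Y2 : Type*} [Fintype X2] [Fintype Y2]
    (pX2 : W2 → Q → X2 → ℝ) (chan : X1 → X2 → Y1 → Y2 → ℝ) (q : Q) (x1 : X1) (w2 : W2) (y1 : Y1) :
    ℝ := kV (fun w x => pX2 w q x) (fun x1 x2 y1 => ∑ y2, chan x1 x2 y1 y2) x1 w2 y1

/-- The channel with the two users exchanged. -/
def swapCh {X1 X2 Y1 Y2 : Type*} (chan : X1 → X2 → Y1 → Y2 → ℝ) : X2 → X1 → Y2 → Y1 → ℝ :=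
  fun x2 x1 y2 y1 => chan x1 x2 y1 y2

theorem rxV_isPmf {Q X1 W2 X2 Y1 Y2 : Type*} [Fintype X2] [Fintype Y1] [Fintype Y2]
    (pX2 : W2 → Q → X2 → ℝ) (chan : X1 → X2 → Y1 → Y2 → ℝ)
    (h0 : ∀ x1 x2 y1 y2, 0 ≤ chan x1 x2 y1 y2)
    (h1 : ∀ x1 x2, ∑ y1 : Y1, ∑ y2 : Y2, chan x1 x2 y1 y2 = 1)
    (hX2 : ∀ w q, IsPmf (pX2 w q)) (q : Q) (x1 : X1) (w2 : W2) : IsPmf (rxV pX2 chan q x1 w2) := by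
  refine ⟨fun y => Finset.sum_nonneg fun x _ => mul_nonneg ((hX2 _ _).1 _)
    (Finset.sum_nonneg fun _ _ => h0 _ _ _ _), ?_⟩
  simp only [rxV, kV]
  rw [Finset.sum_comm]
  simp [← Finset.mul_sum, h1, (hX2 _ _).2]

/-- Messages at rate `T + S` embed into pairs (cloud index, satellite index). -/
theorem exists_split (R T S : ℝ) (h : R = T + S) (n : ℕ) :
    ∃ φ : Fin (Nat.ceil ((2 : ℝ) ^ ((n : ℝ) * R))) → Fin (Lc T n) × Fin (Lc S n),
      Function.Injective φ := by
  have hle : Nat.ceil ((2 : ℝ) ^ ((n : ℝ) * R)) ≤ Lc T n * Lc S n := by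
    rw [Nat.ceil_le, h, mul_add, Real.rpow_add (by norm_num)]
    push_cast
    exact mul_le_mul (Nat.le_ceil _) (Nat.le_ceil _) (by positivity) (by positivity)
  have : Nonempty (Fin (Nat.ceil ((2 : ℝ) ^ ((n : ℝ) * R))) ↪ Fin (Lc T n) × Fin (Lc S n)) := by
    rw [Function.Embedding.nonempty_iff_card_le]
    simpa using hle
  obtain ⟨f⟩ := this
  exact ⟨f, f.injective⟩

/-- Han-Kobayashi achievability before eliminating the split of each rate into a cloud rate `T`
and a satellite rate `S`. -/
theorem coding_theorem {Q W1 W2 X1 X2 Y1 Y2 : Type*}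
    [Fintype Q] [Fintype W1] [Fintype W2]
    [Fintype X1] [Fintype X2] [Fintype Y1] [Fintype Y2]
    (chan : X1 → X2 → Y1 → Y2 → ℝ) (h0 : ∀ x1 x2 y1 y2, 0 ≤ chan x1 x2 y1 y2)
    (h1 : ∀ x1 x2, ∑ y1 : Y1, ∑ y2 : Y2, chan x1 x2 y1 y2 = 1)
    (pQ : Q → ℝ) (pW1 : Q → W1 → ℝ) (pW2 : Q → W2 → ℝ) (pX1 : W1 → Q → X1 → ℝ)
    (pX2 : W2 → Q → X2 → ℝ) (hQ : IsPmf pQ) (hW1 : ∀ q, IsPmf (pW1 q)) (hW2 : ∀ q, IsPmf (pW2 q))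
    (hX1 : ∀ w q, IsPmf (pX1 w q)) (hX2 : ∀ w q, IsPmf (pX2 w q))
    (T1 S1 T2 S2 : ℝ) (hS1 : 0 ≤ S1) (hS2 : 0 ≤ S2)
    (V1 : Q → X1 → W2 → Y1 → ℝ) (hV1 : V1 = rxV pX2 chan)
    (V2 : Q → X2 → W1 → Y2 → ℝ) (hV2 : V2 = rxV pX1 (swapCh chan))
    (hr1 : RateOK T1 S1 T2 (Iof pQ pW1 pX1 pW2 V1 (uA pX1 V1))
      (Iof pQ pW1 pX1 pW2 V1 (uE pX1 pW2 V1)) (Iof pQ pW1 pX1 pW2 V1 (uD pW1 pX1 V1))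
      (Iof pQ pW1 pX1 pW2 V1 (uG pW1 pX1 pW2 V1)))
    (hr2 : RateOK T2 S2 T1 (Iof pQ pW2 pX2 pW1 V2 (uA pX2 V2))
      (Iof pQ pW2 pX2 pW1 V2 (uE pX2 pW1 V2)) (Iof pQ pW2 pX2 pW1 V2 (uD pW2 pX2 V2))
      (Iof pQ pW2 pX2 pW1 V2 (uG pW2 pX2 pW1 V2))) :
    ICAchievable chan (T1 + S1) (T2 + S2) := by
  classical
  have h1' : ∀ x2 x1, ∑ y2 : Y2, ∑ y1 : Y1, swapCh chan x2 x1 y2 y1 = 1 := by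
    intro x2 x1
    rw [Finset.sum_comm]
    exact h1 x1 x2
  obtain ⟨A1, a1, e1, d1, g1, F1, hF1, hA1, hB1⟩ := rx_decay pQ pW1 pX1 pW2 V1 hQ hW1 hX1 hW2
    (by subst hV1; exact rxV_isPmf pX2 chan h0 h1 hX2) T1 S1 T2 hS1 hr1
  obtain ⟨A2, a2, e2, d2, g2, F2, hF2, hA2, hB2⟩ := rx_decay pQ pW2 pX2 pW1 V2 hQ hW2 hX2 hW1
    (by subst hV2; exact rxV_isPmf pX1 (swapCh chan) (fun _ _ _ _ => h0 _ _ _ _) h1' hX1)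
    T2 S2 T1 hS2 hr2
  intro ε hε
  have hF := hF1.add hF2
  rw [add_zero] at hF
  obtain ⟨N, hN⟩ := eventually_atTop.1 (hF.eventually (gt_mem_nhds hε))
  refine ⟨N, fun n hn => ?_⟩
  have hB := add_le_add (hB1 n) (hB2 n)
  rw [← Finset.sum_add_distrib] at hB
  simp only [← mul_add] at hB
  -- a good time-sharing sequence, then a good codebook for it
  obtain ⟨q, hq⟩ := exists_le_of_avg _ _ _ (fun q : Fin n → Q => Finset.prod_nonneg
    fun i _ => hQ.1 _) (isPmf_pi (fun _ : Fin n => pQ) (fun _ => hQ)).2 hB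
  obtain ⟨φ1, hφ1⟩ := exists_split _ T1 S1 rfl n
  obtain ⟨φ2, hφ2⟩ := exists_split _ T2 S2 rfl n
  have k1 := kV_n pX2 chan q
  have k2 := kV_n pX1 (swapCh chan) q
  have t1 := hA1 n q
  have t2 := hA2 n q
  have hV1n : nV V1 q = nV (fun q x1 w2 y1 => kV (fun w x => pX2 w q x)
    (fun x1 x2 y1 => ∑ y2, chan x1 x2 y1 y2) x1 w2 y1) q := by subst hV1; rfl
  have hV2n : nV V2 q = nV (fun q x2 w1 y2 => kV (fun w x => pX1 w q x)
    (fun x2 x1 y2 => ∑ y1, swapCh chan x2 x1 y2 y1) x2 w1 y2) q := by subst hV2; rfl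
  rw [hV1n, ← k1] at t1 hq
  rw [hV2n, ← k2] at t2 hq
  obtain ⟨c1, c2, dec1, dec2, hc⟩ := one_shot (Fin (Lc T1 n)) (Fin (Lc S1 n)) (Fin (Lc T2 n))
    (Fin (Lc S2 n)) (nW pW1 q) (nX pX1 q) (nW pW2 q) (nX pX2 q)
    (fun (x1 : Fin n → X1) (x2 : Fin n → X2) (y1 : Fin n → Y1) (y2 : Fin n → Y2) =>
      ∏ i, chan (x1 i) (x2 i) (y1 i) (y2 i))
    (isPmf_pi _ fun i => hW1 (q i)) (fun w => isPmf_pi _ fun i => hX1 (w i) (q i))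
    (isPmf_pi _ fun i => hW2 (q i)) (fun w => isPmf_pi _ fun i => hX2 (w i) (q i))
    (fun _ _ _ _ => Finset.prod_nonneg fun i _ => h0 _ _ _ _)
    (by
      intro x1 x2
      have h : ∀ y1 : Fin n → Y1, _ := fun y1 =>
        sum_pi_prod (fun i y2 => chan (x1 i) (x2 i) (y1 i) y2)
      simp_rw [h]
      rw [sum_pi_prod (fun i y1 => ∑ y2, chan (x1 i) (x2 i) y1 y2)]
      simp [h1])
    (A1 n q) _ _ _ _ t1 (A2 n q) _ _ _ _ t2 _ _ (Nat.ceil_pos.2 (by positivity))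
    (Nat.ceil_pos.2 (by positivity)) φ1 hφ1 φ2 hφ2
  refine ⟨c1, c2, dec1, dec2, ?_⟩
  simp only [Fintype.card_fin] at hc
  unfold icCodeErr
  refine le_trans hc (le_trans hq (hN n hn).le)

end Coding

/-! ### Comparing information quantities -/

/-- Gibbs' inequality: if `U' / U` has mean at most one, then `U'` is on average the smaller
denominator on the logarithmic scale. -/
theorem gibbs {Ω : Type*} [Fintype Ω] (r V U U' : Ω → ℝ) (hr : IsPmf r)
    (hV : ∀ ω, r ω ≠ 0 → 0 < V ω) (hU : ∀ ω, r ω ≠ 0 → 0 < U ω) (hU' : ∀ ω, r ω ≠ 0 → 0 < U' ω)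
    (h : ∑ ω, r ω * (U' ω / U ω) ≤ 1) :
    ∑ ω, r ω * Real.logb 2 (V ω / U ω) ≤ ∑ ω, r ω * Real.logb 2 (V ω / U' ω) := by
  have hl : 0 < Real.log 2 := Real.log_pos (by norm_num)
  have key : ∀ ω, r ω * Real.logb 2 (V ω / U ω) - r ω * Real.logb 2 (V ω / U' ω) ≤
      (r ω * (U' ω / U ω) - r ω) / Real.log 2 := by
    intro ω
    by_cases h0 : r ω = 0
    · simp [h0]
    have hv := hV ω h0
    have hu := hU ω h0
    have hu' := hU' ω h0
    rw [Real.logb_div hv.ne' hu.ne', Real.logb_div hv.ne' hu'.ne']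
    have e : r ω * (Real.logb 2 (V ω) - Real.logb 2 (U ω)) -
        r ω * (Real.logb 2 (V ω) - Real.logb 2 (U' ω)) =
        r ω * Real.log (U' ω / U ω) / Real.log 2 := by
      rw [Real.log_div hu'.ne' hu.ne']
      simp only [Real.logb]
      ring
    rw [e]
    refine div_le_div_of_nonneg_right ?_ hl.le
    have := Real.log_le_sub_one_of_pos (div_pos hu' hu)
    nlinarith [mul_le_mul_of_nonneg_left this (hr.1 ω)]
  have s := Finset.sum_le_sum fun ω (_ : ω ∈ Finset.univ) => key ω
  rw [Finset.sum_sub_distrib, ← Finset.sum_div, Finset.sum_sub_distrib, hr.2] at s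
  have : (∑ ω, r ω * (U' ω / U ω) - 1) / Real.log 2 ≤ 0 :=
    div_nonpos_of_nonpos_of_nonneg (by linarith) hl.le
  linarith

theorem mul_div_le_of_nonneg (a b : ℝ) (hb : 0 ≤ b) : a * (b / a) ≤ b := by
  by_cases h : a = 0
  · simpa [h] using hb
  · rw [mul_div_cancel₀ _ h]

section Compare
variable {Q W1 X1 W2 Y : Type*} [Fintype Q] [Fintype W1] [Fintype X1] [Fintype W2] [Fintype Y]
  (pQ : Q → ℝ) (pW1 : Q → W1 → ℝ) (pX1 : W1 → Q → X1 → ℝ) (pW2 : Q → W2 → ℝ)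
  (V : Q → X1 → W2 → Y → ℝ) (hQ : IsPmf pQ) (hW1 : ∀ q, IsPmf (pW1 q))
  (hX1 : ∀ w q, IsPmf (pX1 w q)) (hW2 : ∀ q, IsPmf (pW2 q)) (hV : ∀ q x w, IsPmf (V q x w))

/-- Receiver's channel with the interferer's cloud centre averaged out. -/
noncomputable def mergeV (pW2 : Q → W2 → ℝ) (V : Q → X1 → W2 → Y → ℝ) (q : Q) (x : X1)
    (_ : Unit) (y : Y) : ℝ := ∑ w2, pW2 q w2 * V q x w2 y

/-- Input law with the cloud centre averaged out. -/
noncomputable def mergeX (pW1 : Q → W1 → ℝ) (pX1 : W1 → Q → X1 → ℝ) (_ : Unit) (q : Q) (x : X1) :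
    ℝ := ∑ w1, pW1 q w1 * pX1 w1 q x

/-- Law of the trivial cloud centre. -/
def unitW (_ : Q) (_ : Unit) : ℝ := 1

omit [Fintype Q] [Fintype W1] [Fintype X1] [Fintype W2] [Fintype Y] in
theorem unitW_isPmf (q : Q) : IsPmf (unitW q) := ⟨fun _ => zero_le_one, by simp [unitW]⟩

include hW1 hX1 in
omit [Fintype Q] [Fintype W2] [Fintype Y] in
theorem mergeX_isPmf (w : Unit) (q : Q) : IsPmf (mergeX pW1 pX1 w q) := by
  refine ⟨fun x => Finset.sum_nonneg fun _ _ => mul_nonneg ((hW1 _).1 _) ((hX1 _ _).1 _), ?_⟩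
  simp only [mergeX]
  rw [Finset.sum_comm]
  simp [← Finset.mul_sum, (hX1 _ _).2, (hW1 _).2]

include hQ hW1 hX1 hW2 hV

omit [Fintype Q] [Fintype X1] hQ hX1 hW1 in
theorem mergeV_isPmf (q : Q) (x : X1) (w : Unit) : IsPmf (mergeV pW2 V q x w) := by
  refine ⟨fun x => Finset.sum_nonneg fun _ _ => mul_nonneg ((hW2 _).1 _) ((hV _ _ _).1 _), ?_⟩
  simp only [mergeV]
  rw [Finset.sum_comm]
  simp [← Finset.mul_sum, (hW2 _).2, (hV _ _ _).2]

omit [Fintype Q] [Fintype W1] hQ hW1 in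
theorem uE_sum (q : Q) (w1 : W1) (w2 : W2) : ∑ y, uE pX1 pW2 V q w1 w2 y = 1 := by
  simp only [uE, kE]
  rw [Finset.sum_comm]
  simp only [← Finset.mul_sum]
  have : ∀ x, ∑ y, ∑ w2, pW2 q w2 * V q x w2 y = 1 := fun x =>
    (mergeV_isPmf pW2 V hW2 hV q x ()).2
  simp [this, (hX1 _ _).2]

omit [Fintype Q] hQ in
theorem uG_sum (q : Q) (w1 : W1) (w2 : W2) : ∑ y, uG pW1 pX1 pW2 V q w1 w2 y = 1 := by
  simp only [uG, kG]
  rw [Finset.sum_comm]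
  simp only [← Finset.mul_sum]
  have : ∀ w, ∑ y, kE (fun w x => pX1 w q x) (pW2 q) (V q) w y = 1 := fun w =>
    uE_sum pX1 pW2 V hX1 hW2 hV q w w2
  simp [this, (hW1 _).2]

/-- `I(X; Y | Q, W, W') ≤ I(W', X; Y | Q, W)`, for own cloud centre `W` and interfering one `W'`. -/
theorem info_a_le_e : Iof pQ pW1 pX1 pW2 V (uA pX1 V) ≤ Iof pQ pW1 pX1 pW2 V (uE pX1 pW2 V) := by
  have hr := rl_isPmf pQ pW1 pX1 pW2 V hQ hW1 hX1 hW2 hV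
  have hp := u_pos pQ pW1 pX1 pW2 V hQ hW1 hX1 hW2 hV
  refine gibbs _ (fun ω => V ω.1 ω.2.2.1 ω.2.2.2.1 ω.2.2.2.2) _ _ hr
    (fun ω h => (hp _ _ _ _ _ h).1) (fun ω h => (hp _ _ _ _ _ h).2.1)
    (fun ω h => (hp _ _ _ _ _ h).2.2.1) ?_
  simp only [Fintype.sum_prod_type, rl]
  calc _ = ∑ q, ∑ w1, ∑ w2, ∑ y, pQ q * (pW1 q w1 * (pW2 q w2 *
        (uA pX1 V q w1 w2 y * (uE pX1 pW2 V q w1 w2 y / uA pX1 V q w1 w2 y)))) := by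
        refine Finset.sum_congr rfl fun q _ => Finset.sum_congr rfl fun w1 _ => ?_
        rw [Finset.sum_comm]
        refine Finset.sum_congr rfl fun w2 _ => ?_
        rw [Finset.sum_comm]
        refine Finset.sum_congr rfl fun y _ => ?_
        generalize uE pX1 pW2 V q w1 w2 y / uA pX1 V q w1 w2 y = c
        simp only [uA, kA, Finset.sum_mul, Finset.mul_sum]
        exact Finset.sum_congr rfl fun x _ => by ring
    _ ≤ ∑ q, ∑ w1, ∑ w2, ∑ y, pQ q * (pW1 q w1 * (pW2 q w2 * uE pX1 pW2 V q w1 w2 y)) := by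
        gcongr with q _ w1 _ w2 _ y _
        · exact hQ.1 q
        · exact (hW1 q).1 w1
        · exact (hW2 q).1 w2
        · exact mul_div_le_of_nonneg _ _ (uE_nonneg pQ pW1 pX1 pW2 V hQ hW1 hX1 hW2 hV q w1 w2 y)
    _ = 1 := by
        simp [← Finset.mul_sum, uE_sum pX1 pW2 V hX1 hW2 hV, (hW1 _).2, (hW2 _).2, hQ.2]

/-- `I(X; Y | Q, W') ≤ I(W', X; Y | Q)`, for interfering cloud centre `W'`. -/
theorem info_d_le_g :
    Iof pQ pW1 pX1 pW2 V (uD pW1 pX1 V) ≤ Iof pQ pW1 pX1 pW2 V (uG pW1 pX1 pW2 V) := by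
  have hr := rl_isPmf pQ pW1 pX1 pW2 V hQ hW1 hX1 hW2 hV
  have hp := u_pos pQ pW1 pX1 pW2 V hQ hW1 hX1 hW2 hV
  refine gibbs _ (fun ω => V ω.1 ω.2.2.1 ω.2.2.2.1 ω.2.2.2.2) _ _ hr
    (fun ω h => (hp _ _ _ _ _ h).1) (fun ω h => (hp _ _ _ _ _ h).2.2.2.1)
    (fun ω h => (hp _ _ _ _ _ h).2.2.2.2) ?_
  obtain ⟨w0⟩ : Nonempty W1 := by
    by_contra hne
    rw [not_nonempty_iff] at hne
    have := hr.2
    simp at this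
  simp only [Fintype.sum_prod_type, rl]
  calc _ = ∑ q, ∑ w2, ∑ y, pQ q * (pW2 q w2 *
        (uD pW1 pX1 V q w0 w2 y * (uG pW1 pX1 pW2 V q w0 w2 y / uD pW1 pX1 V q w0 w2 y))) := by
        refine Finset.sum_congr rfl fun q _ => ?_
        simp_rw [fun w1 : W1 => Finset.sum_comm (s := (Finset.univ : Finset X1))
          (t := (Finset.univ : Finset W2)) (f := fun x1 w2 => ∑ y, pQ q * pW1 q w1 * pX1 w1 q x1 *
          pW2 q w2 * V q x1 w2 y * (uG pW1 pX1 pW2 V q w1 w2 y / uD pW1 pX1 V q w1 w2 y))]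
        rw [Finset.sum_comm]
        refine Finset.sum_congr rfl fun w2 _ => ?_
        simp_rw [fun w1 : W1 => Finset.sum_comm (s := (Finset.univ : Finset X1))
          (t := (Finset.univ : Finset Y)) (f := fun x1 y => pQ q * pW1 q w1 * pX1 w1 q x1 *
          pW2 q w2 * V q x1 w2 y * (uG pW1 pX1 pW2 V q w1 w2 y / uD pW1 pX1 V q w1 w2 y))]
        rw [Finset.sum_comm]
        refine Finset.sum_congr rfl fun y _ => ?_
        change ∑ w1, ∑ x1, pQ q * pW1 q w1 * pX1 w1 q x1 *
          pW2 q w2 * V q x1 w2 y * (uG pW1 pX1 pW2 V q w0 w2 y / uD pW1 pX1 V q w0 w2 y) = _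
        generalize uG pW1 pX1 pW2 V q w0 w2 y / uD pW1 pX1 V q w0 w2 y = c
        simp only [uD, kD, kA, Finset.sum_mul, Finset.mul_sum]
        exact Finset.sum_congr rfl fun w _ => Finset.sum_congr rfl fun x _ => by ring
    _ ≤ ∑ q, ∑ w2, ∑ y, pQ q * (pW2 q w2 * uG pW1 pX1 pW2 V q w0 w2 y) := by
        gcongr with q _ w2 _ y _
        · exact hQ.1 q
        · exact (hW2 q).1 w2
        · exact mul_div_le_of_nonneg _ _ (uG_nonneg pQ pW1 pX1 pW2 V hQ hW1 hX1 hW2 hV q w0 w2 y)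
    _ = 1 := by
        simp [← Finset.mul_sum, uG_sum pW1 pX1 pW2 V hW1 hX1 hW2 hV, (hW2 _).2, hQ.2]

/-- `I(X; Y | Q)`, the information when the interferer's cloud centre `W'` is treated as noise, is at
least `I(W', X; Y | Q) - I(W', X; Y | Q, W)`, where `W` is the own cloud centre. This is Gibbs'
inequality for the output laws given `(Q, X)` and given `(Q, W)`. -/
theorem info_mergeV : Iof pQ pW1 pX1 pW2 V (uG pW1 pX1 pW2 V) -
      Iof pQ pW1 pX1 pW2 V (uE pX1 pW2 V) ≤
    Iof pQ pW1 pX1 unitW (mergeV pW2 V) (uD pW1 pX1 (mergeV pW2 V)) := by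
  have hr := rl_isPmf pQ pW1 pX1 pW2 V hQ hW1 hX1 hW2 hV
  have hp := u_pos pQ pW1 pX1 pW2 V hQ hW1 hX1 hW2 hV
  have hm : ∀ ω : Q × W1 × X1 × W2 × Y, rl pQ pW1 pX1 pW2 V ω ≠ 0 →
      0 < mergeV pW2 V ω.1 ω.2.2.1 () ω.2.2.2.2 := by
    rintro ⟨q, w1, x1, w2, y⟩ h
    have h5 := (hp _ _ _ _ _ h).1
    simp only [rl, ne_eq, mul_eq_zero, not_or] at h
    exact pos_of_sum_term _ w2 (fun _ => mul_nonneg ((hW2 _).1 _) ((hV _ _ _).1 _))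
      (mul_pos (lt_of_le_of_ne ((hW2 q).1 w2) (Ne.symm h.1.2)) h5)
  have hg := gibbs (rl pQ pW1 pX1 pW2 V) (fun ω => V ω.1 ω.2.2.1 ω.2.2.2.1 ω.2.2.2.2)
    (fun ω => mergeV pW2 V ω.1 ω.2.2.1 () ω.2.2.2.2)
    (fun ω => uE pX1 pW2 V ω.1 ω.2.1 ω.2.2.2.1 ω.2.2.2.2) hr
    (fun ω h => (hp _ _ _ _ _ h).1) hm (fun ω h => (hp _ _ _ _ _ h).2.2.1) ?_
  · have e1 : Iof pQ pW1 pX1 unitW (mergeV pW2 V) (uD pW1 pX1 (mergeV pW2 V)) =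
        ∑ ω, rl pQ pW1 pX1 pW2 V ω * Real.logb 2 (mergeV pW2 V ω.1 ω.2.2.1 () ω.2.2.2.2 /
          uG pW1 pX1 pW2 V ω.1 ω.2.1 ω.2.2.2.1 ω.2.2.2.2) := by
      simp only [Iof, Fintype.sum_prod_type, rl]
      refine Finset.sum_congr rfl fun q _ => Finset.sum_congr rfl fun w1 _ =>
        Finset.sum_congr rfl fun x1 _ => ?_
      rw [Finset.sum_comm]
      conv_rhs => rw [Finset.sum_comm]
      refine Finset.sum_congr rfl fun y _ => ?_
      simp only [Fintype.sum_unique]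
      change pQ q * pW1 q w1 * pX1 w1 q x1 * 1 * mergeV pW2 V q x1 () y * Real.logb 2
        (mergeV pW2 V q x1 () y / kG (pW1 q) (fun w x => pX1 w q x) (pW2 q) (V q) y) =
        ∑ w2, pQ q * pW1 q w1 * pX1 w1 q x1 * pW2 q w2 * V q x1 w2 y * Real.logb 2
        (mergeV pW2 V q x1 () y / kG (pW1 q) (fun w x => pX1 w q x) (pW2 q) (V q) y)
      generalize Real.logb 2 (mergeV pW2 V q x1 () y /
        kG (pW1 q) (fun w x => pX1 w q x) (pW2 q) (V q) y) = c
      simp only [mergeV, Finset.mul_sum, Finset.sum_mul]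
      exact Finset.sum_congr rfl fun _ _ => by ring
    have e2 : ∑ ω, rl pQ pW1 pX1 pW2 V ω * Real.logb 2 (mergeV pW2 V ω.1 ω.2.2.1 () ω.2.2.2.2 /
          uG pW1 pX1 pW2 V ω.1 ω.2.1 ω.2.2.2.1 ω.2.2.2.2) =
        Iof pQ pW1 pX1 pW2 V (uG pW1 pX1 pW2 V) - ∑ ω, rl pQ pW1 pX1 pW2 V ω * Real.logb 2
          (V ω.1 ω.2.2.1 ω.2.2.2.1 ω.2.2.2.2 / mergeV pW2 V ω.1 ω.2.2.1 () ω.2.2.2.2) := by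
      rw [Iof, ← Finset.sum_sub_distrib]
      refine Finset.sum_congr rfl fun ω _ => ?_
      by_cases h0 : rl pQ pW1 pX1 pW2 V ω = 0
      · simp [h0]
      have hh := hp _ _ _ _ _ h0
      rw [Real.logb_div (hm ω h0).ne' hh.2.2.2.2.ne', Real.logb_div hh.1.ne' hh.2.2.2.2.ne',
        Real.logb_div hh.1.ne' (hm ω h0).ne']
      ring
    rw [e1, e2]
    have : Iof pQ pW1 pX1 pW2 V (uE pX1 pW2 V) = ∑ ω, rl pQ pW1 pX1 pW2 V ω * Real.logb 2
      (V ω.1 ω.2.2.1 ω.2.2.2.1 ω.2.2.2.2 / uE pX1 pW2 V ω.1 ω.2.1 ω.2.2.2.1 ω.2.2.2.2) := rfl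
    linarith
  · simp only [Fintype.sum_prod_type, rl]
    obtain ⟨w0⟩ : Nonempty W2 := by
      by_contra hne
      rw [not_nonempty_iff] at hne
      have := hr.2
      simp at this
    calc _ = ∑ q, ∑ w1, ∑ x1, ∑ y, pQ q * (pW1 q w1 * (pX1 w1 q x1 * (mergeV pW2 V q x1 () y *
          (uE pX1 pW2 V q w1 w0 y / mergeV pW2 V q x1 () y)))) := by
          refine Finset.sum_congr rfl fun q _ => Finset.sum_congr rfl fun w1 _ =>
            Finset.sum_congr rfl fun x1 _ => ?_
          rw [Finset.sum_comm]
          refine Finset.sum_congr rfl fun y _ => ?_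
          change ∑ w2, pQ q * pW1 q w1 * pX1 w1 q x1 *
            pW2 q w2 * V q x1 w2 y * (uE pX1 pW2 V q w1 w0 y / mergeV pW2 V q x1 () y) = _
          generalize uE pX1 pW2 V q w1 w0 y / mergeV pW2 V q x1 () y = c
          simp only [mergeV, Finset.sum_mul, Finset.mul_sum]
          exact Finset.sum_congr rfl fun w _ => by ring
      _ ≤ ∑ q, ∑ w1, ∑ x1, ∑ y, pQ q * (pW1 q w1 * (pX1 w1 q x1 * uE pX1 pW2 V q w1 w0 y)) := by
          gcongr with q _ w1 _ x1 _ y _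
          · exact hQ.1 q
          · exact (hW1 q).1 w1
          · exact (hX1 w1 q).1 x1
          · exact mul_div_le_of_nonneg _ _
              (uE_nonneg pQ pW1 pX1 pW2 V hQ hW1 hX1 hW2 hV q w1 w0 y)
      _ = 1 := by
          simp [← Finset.mul_sum, uE_sum pX1 pW2 V hX1 hW2 hV, (hX1 _ _).2, (hW1 _).2, hQ.2]

omit hQ hW1 hX1 hW2 hV in
/-- A mean log-likelihood ratio that does not involve the own cloud centre is unchanged when that
centre is averaged into the input. -/
theorem info_mergeX (f : Q → W2 → Y → ℝ) :
    Iof pQ unitW (mergeX pW1 pX1) pW2 V (fun q _ w2 y => f q w2 y) =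
      Iof pQ pW1 pX1 pW2 V (fun q _ w2 y => f q w2 y) := by
  simp only [Iof, Fintype.sum_prod_type, rl]
  refine Finset.sum_congr rfl fun q _ => ?_
  conv_rhs => rw [Finset.sum_comm]
  simp only [Fintype.sum_unique]
  refine Finset.sum_congr rfl fun x _ => ?_
  conv_rhs => rw [Finset.sum_comm]
  refine Finset.sum_congr rfl fun w2 _ => ?_
  conv_rhs => rw [Finset.sum_comm]
  refine Finset.sum_congr rfl fun y _ => ?_
  simp only [mergeX, unitW, Finset.mul_sum, Finset.sum_mul]
  exact Finset.sum_congr rfl fun w _ => by ring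

omit [Fintype Q] [Fintype W2] [Fintype Y] hQ hW1 hX1 hW2 hV in
theorem uA_mergeX : uA (mergeX pW1 pX1) V = fun q _ w2 y => kD (pW1 q) (fun w x => pX1 w q x)
    (V q) w2 y := by
  funext q _ w2 y
  simp only [uA, kA, kD, mergeX, Finset.sum_mul, Finset.mul_sum]
  rw [Finset.sum_comm]
  exact Finset.sum_congr rfl fun w _ => Finset.sum_congr rfl fun x _ => by ring

omit [Fintype Q] [Fintype Y] hQ hW1 hX1 hW2 hV in
theorem uE_mergeX : uE (mergeX pW1 pX1) pW2 V = fun q _ w2 y =>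
    kG (pW1 q) (fun w x => pX1 w q x) (pW2 q) (V q) y := by
  funext q _ w2 y
  simp only [uE, kE, kG, mergeX, Finset.sum_mul]
  rw [Finset.sum_comm]
  refine Finset.sum_congr rfl fun w _ => ?_
  rw [Finset.mul_sum]
  exact Finset.sum_congr rfl fun x _ => by ring

end Compare

theorem rxV_mergeX {Q X1 W1 X2 Y1 Y2 : Type*} [Fintype W1] [Fintype X1] [Fintype Y1]
    (pW1 : Q → W1 → ℝ) (pX1 : W1 → Q → X1 → ℝ) (chan : X2 → X1 → Y2 → Y1 → ℝ) :
    rxV (mergeX pW1 pX1) chan = mergeV pW1 (rxV pX1 chan) := by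
  funext q x w y
  simp only [rxV, kV, mergeV, mergeX, Finset.sum_mul]
  rw [Finset.sum_comm]
  refine Finset.sum_congr rfl fun w _ => ?_
  rw [Finset.mul_sum]
  exact Finset.sum_congr rfl fun x _ => by ring

/-! ### Conditional mutual informations as mean log-likelihood ratios -/

section Entropy

/-- Law of `f` under the pmf `p`. -/
noncomputable def pf {Ω α : Type*} [Fintype Ω] [DecidableEq α] (p : Ω → ℝ) (f : Ω → α) (a : α) :
    ℝ := ∑ ω, if f ω = a then p ω else 0

variable {Ω α β γ : Type*} [Fintype Ω] [Fintype α] [Fintype β] [Fintype γ]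
  [DecidableEq α] [DecidableEq β] [DecidableEq γ]

omit [DecidableEq β] in
theorem margEnt_map (p : Ω → ℝ) (π : Ω → α) (f : α → γ) :
    margEnt p (fun ω => f (π ω)) = margEnt (pf p π) f := by
  have : ∀ c, (∑ ω, if f (π ω) = c then p ω else 0) = ∑ a, if f a = c then pf p π a else 0 := by
    intro c
    have h : ∀ a, (if f a = c then pf p π a else 0) =
        ∑ ω, if π ω = a then (if f a = c then p ω else 0) else 0 := by
      intro a
      by_cases h : f a = c <;> simp [h, pf]
    simp only [h]
    rw [Finset.sum_comm]
    simp
  simp only [margEnt, this]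

theorem margEnt_eq (p : Ω → ℝ) (f : Ω → α) :
    margEnt p f = -∑ ω, p ω * Real.logb 2 (pf p f (f ω)) := by
  simp only [margEnt, ← Finset.sum_neg_distrib]
  change ∑ a, -((∑ ω, if f ω = a then p ω else 0) * Real.logb 2 (pf p f a)) = _
  simp only [Finset.sum_mul, ← Finset.sum_neg_distrib]
  rw [Finset.sum_comm]
  refine Finset.sum_congr rfl fun ω _ => ?_
  simp [ite_mul]

omit [Fintype α] in
theorem pf_pos (p : Ω → ℝ) (hp : ∀ ω, 0 ≤ p ω) (f : Ω → α) (ω : Ω) (h : p ω ≠ 0) :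
    0 < pf p f (f ω) :=
  pos_of_sum_term _ ω (fun ω' => by split_ifs; exacts [hp _, le_rfl])
    (by simpa using lt_of_le_of_ne (hp ω) (Ne.symm h))

/-- If `v` is the law of `g` given `(f, h)` and `u` the law of `g` given `h`, then `I(f; g | h)` is
the mean of `log (v / u)`. -/
theorem cmi_eq (p : Ω → ℝ) (hp : ∀ ω, 0 ≤ p ω) (f : Ω → α) (g : Ω → β) (h : Ω → γ) (v u : Ω → ℝ)
    (hv : ∀ ω, pf p (fun ω => (f ω, g ω, h ω)) (f ω, g ω, h ω) =
      pf p (fun ω => (f ω, h ω)) (f ω, h ω) * v ω)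
    (hu : ∀ ω, pf p (fun ω => (g ω, h ω)) (g ω, h ω) = pf p h (h ω) * u ω) :
    cmi p f g h = ∑ ω, p ω * Real.logb 2 (v ω / u ω) := by
  simp only [cmi, margEnt_eq]
  have : ∀ ω, p ω * Real.logb 2 (v ω / u ω) =
      -(p ω * Real.logb 2 (pf p (fun ω => (f ω, h ω)) (f ω, h ω))) +
      -(p ω * Real.logb 2 (pf p (fun ω => (g ω, h ω)) (g ω, h ω))) -
      -(p ω * Real.logb 2 (pf p (fun ω => (f ω, g ω, h ω)) (f ω, g ω, h ω))) -
      -(p ω * Real.logb 2 (pf p h (h ω))) := by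
    intro ω
    by_cases h0 : p ω = 0
    · simp [h0]
    have a1 := pf_pos p hp (fun ω => (f ω, g ω, h ω)) ω h0
    have a2 := pf_pos p hp (fun ω => (f ω, h ω)) ω h0
    have a3 := pf_pos p hp (fun ω => (g ω, h ω)) ω h0
    have a4 := pf_pos p hp h ω h0
    rw [hv] at a1
    rw [hu] at a3
    have v0 := pos_of_mul_pos_right a1 a2.le
    have u0 := pos_of_mul_pos_right a3 a4.le
    rw [hv, hu, Real.logb_div v0.ne' u0.ne', Real.logb_mul a2.ne' v0.ne',
      Real.logb_mul a4.ne' u0.ne']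
    ring
  simp only [this, Finset.sum_sub_distrib, Finset.sum_add_distrib, Finset.sum_neg_distrib]

end Entropy

section Rx
variable {Q W1 X1 W2 Y : Type*} [Fintype Q] [Fintype W1] [Fintype X1] [Fintype W2] [Fintype Y]
  [DecidableEq Q] [DecidableEq W1] [DecidableEq X1] [DecidableEq W2] [DecidableEq Y]
  (pQ : Q → ℝ) (pW1 : Q → W1 → ℝ) (pX1 : W1 → Q → X1 → ℝ) (pW2 : Q → W2 → ℝ)
  (V : Q → X1 → W2 → Y → ℝ) (hQ : IsPmf pQ) (hW1 : ∀ q, IsPmf (pW1 q))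
  (hX1 : ∀ w q, IsPmf (pX1 w q)) (hW2 : ∀ q, IsPmf (pW2 q)) (hV : ∀ q x w, IsPmf (V q x w))
include hQ hW1 hX1 hW2 hV

omit [Fintype Q] [Fintype W1] [Fintype X1] [Fintype W2] [Fintype Y] [DecidableEq Q] [DecidableEq W1]
  [DecidableEq X1] [DecidableEq W2] [DecidableEq Y] hQ hW1 hX1 hW2 hV in
theorem rl_eq (q : Q) (w1 : W1) (x1 : X1) (w2 : W2) (y : Y) : rl pQ pW1 pX1 pW2 V (q, w1, x1, w2, y)
    = pQ q * (pW2 q w2 * (pW1 q w1 * (pX1 w1 q x1 * V q x1 w2 y))) := by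
  simp only [rl]
  ring

omit [Fintype Q] [Fintype W1] [Fintype X1] [Fintype W2] [Fintype Y] [DecidableEq Q] [DecidableEq W1]
  [DecidableEq X1] [DecidableEq W2] [DecidableEq Y] hQ hW1 hX1 hW2 hV in
theorem rl_eq' (q : Q) (w1 : W1) (x1 : X1) (w2 : W2) (y : Y) :
    rl pQ pW1 pX1 pW2 V (q, w1, x1, w2, y)
    = pQ q * (pW1 q w1 * (pX1 w1 q x1 * (pW2 q w2 * V q x1 w2 y))) := by
  simp only [rl]
  ring

theorem cmi_a : cmi (rl pQ pW1 pX1 pW2 V) (fun ω => ω.2.2.1) (fun ω => ω.2.2.2.2)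
    (fun ω => (ω.1, ω.2.1, ω.2.2.2.1)) = Iof pQ pW1 pX1 pW2 V (uA pX1 V) := by
  have hr := rl_isPmf pQ pW1 pX1 pW2 V hQ hW1 hX1 hW2 hV
  refine cmi_eq _ hr.1 _ _ _ _ _ ?_ ?_ <;> rintro ⟨q, w1, x1, w2, y⟩ <;>
    simp [pf, Fintype.sum_prod_type, ite_and, Finset.sum_ite_irrel, rl_eq, ← Finset.mul_sum,
      (hV _ _ _).2, (hX1 _ _).2, uA, kA, mul_assoc]

theorem cmi_a' : cmi (rl pQ pW1 pX1 pW2 V) (fun ω => ω.2.2.1) (fun ω => ω.2.2.2.2)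
    (fun ω => (ω.1, ω.2.2.2.1, ω.2.1)) = Iof pQ pW1 pX1 pW2 V (uA pX1 V) := by
  have hr := rl_isPmf pQ pW1 pX1 pW2 V hQ hW1 hX1 hW2 hV
  refine cmi_eq _ hr.1 _ _ _ _ _ ?_ ?_ <;> rintro ⟨q, w1, x1, w2, y⟩ <;>
    simp [pf, Fintype.sum_prod_type, ite_and, Finset.sum_ite_irrel, rl_eq, ← Finset.mul_sum,
      (hV _ _ _).2, (hX1 _ _).2, uA, kA, mul_assoc]

theorem cmi_d : cmi (rl pQ pW1 pX1 pW2 V) (fun ω => ω.2.2.1) (fun ω => ω.2.2.2.2)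
    (fun ω => (ω.1, ω.2.2.2.1)) = Iof pQ pW1 pX1 pW2 V (uD pW1 pX1 V) := by
  have hr := rl_isPmf pQ pW1 pX1 pW2 V hQ hW1 hX1 hW2 hV
  refine cmi_eq _ hr.1 _ _ _ _ _ ?_ ?_ <;> rintro ⟨q, w1, x1, w2, y⟩ <;>
    simp [pf, Fintype.sum_prod_type, ite_and, Finset.sum_ite_irrel, rl_eq, ← Finset.mul_sum,
      (hV _ _ _).2, (hX1 _ _).2, (hW1 _).2, uD, kD, kA, mul_assoc]
  exact Or.inl (Or.inl (by simp [Finset.sum_mul, mul_assoc]))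

theorem cmi_e : cmi (rl pQ pW1 pX1 pW2 V) (fun ω => (ω.2.2.2.1, ω.2.2.1)) (fun ω => ω.2.2.2.2)
    (fun ω => (ω.1, ω.2.1)) = Iof pQ pW1 pX1 pW2 V (uE pX1 pW2 V) := by
  have hr := rl_isPmf pQ pW1 pX1 pW2 V hQ hW1 hX1 hW2 hV
  refine cmi_eq _ hr.1 _ _ _ _ _ ?_ ?_ <;> rintro ⟨q, w1, x1, w2, y⟩ <;>
    simp [pf, Fintype.sum_prod_type, ite_and, Finset.sum_ite_irrel, rl_eq', ← Finset.mul_sum,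
      (hV _ _ _).2, (hX1 _ _).2, (hW1 _).2, (hW2 _).2, uE, kE, mul_assoc]

theorem cmi_g : cmi (rl pQ pW1 pX1 pW2 V) (fun ω => (ω.2.2.2.1, ω.2.2.1)) (fun ω => ω.2.2.2.2)
    (fun ω => ω.1) = Iof pQ pW1 pX1 pW2 V (uG pW1 pX1 pW2 V) := by
  have hr := rl_isPmf pQ pW1 pX1 pW2 V hQ hW1 hX1 hW2 hV
  refine cmi_eq _ hr.1 _ _ _ _ _ ?_ ?_ <;> rintro ⟨q, w1, x1, w2, y⟩ <;>
    simp [pf, Fintype.sum_prod_type, ite_and, Finset.sum_ite_irrel, rl_eq', ← Finset.mul_sum,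
      (hV _ _ _).2, (hX1 _ _).2, (hW1 _).2, (hW2 _).2, uG, kG, kE, mul_assoc]
  exact Or.inl (by simp [Finset.sum_mul, mul_assoc])

end Rx

section Receivers
variable {Q W1 W2 X1 X2 Y1 Y2 : Type*}
  [Fintype Q] [Fintype W1] [Fintype W2] [Fintype X1] [Fintype X2] [Fintype Y1] [Fintype Y2]
  [DecidableEq Q] [DecidableEq W1] [DecidableEq W2] [DecidableEq X1] [DecidableEq X2]
  [DecidableEq Y1] [DecidableEq Y2]
  (chan : X1 → X2 → Y1 → Y2 → ℝ)
  (pQ : Q → ℝ) (pW1 : Q → W1 → ℝ) (pW2 : Q → W2 → ℝ) (pX1 : W1 → Q → X1 → ℝ)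
  (pX2 : W2 → Q → X2 → ℝ) (p : Omega7 Q W1 W2 X1 X2 Y1 Y2 → ℝ)
  (hp : ∀ q w1 w2 x1 x2 y1 y2, p (q, w1, w2, x1, x2, y1, y2) =
    pQ q * pW1 q w1 * pW2 q w2 * pX1 w1 q x1 * pX2 w2 q x2 * chan x1 x2 y1 y2)
include hp

theorem pf_rx1 : pf p (fun ω => (qQ ω, qW1 ω, qX1 ω, qW2 ω, qY1 ω)) =
    rl pQ pW1 pX1 pW2 (rxV pX2 chan) := by
  funext ⟨q, w1, x1, w2, y⟩
  simp [pf, Fintype.sum_prod_type, ite_and, Finset.sum_ite_irrel, qQ, qW1, qX1, qW2, qY1, hp, rl,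
    rxV, kV, Finset.mul_sum]
  exact Finset.sum_congr rfl fun _ _ => Finset.sum_congr rfl fun _ _ => by ring

theorem pf_rx2 : pf p (fun ω => (qQ ω, qW2 ω, qX2 ω, qW1 ω, qY2 ω)) =
    rl pQ pW2 pX2 pW1 (rxV pX1 (swapCh chan)) := by
  funext ⟨q, w1, x1, w2, y⟩
  simp [pf, Fintype.sum_prod_type, ite_and, Finset.sum_ite_irrel, qQ, qW2, qX2, qW1, qY2, hp, rl,
    rxV, kV, Finset.mul_sum, swapCh]
  exact Finset.sum_congr rfl fun _ _ => Finset.sum_congr rfl fun _ _ => by ring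

end Receivers

/-! ### Eliminating the rate split -/

/-- A common slack for finitely many strict inequalities. -/
theorem exists_delta (l : List ℝ) (h : ∀ s ∈ l, 0 < s) : ∃ δ : ℝ, 0 < δ ∧ ∀ s ∈ l, 4 * δ < s := by
  induction l with
  | nil => exact ⟨1, one_pos, by simp⟩
  | cons a l ih =>
    obtain ⟨δ, h0, h1⟩ := ih fun s hs => h s (List.mem_cons_of_mem _ hs)
    have ha : 0 < a := h a (by simp)
    refine ⟨min δ (a / 8), lt_min h0 (by linarith), fun s hs => ?_⟩
    rcases List.mem_cons.1 hs with rfl | hs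
    · linarith [min_le_right δ (s / 8)]
    · linarith [min_le_left δ (a / 8), h1 s hs]

/-- Fourier-Motzkin elimination when the first user has no satellite rate. -/
theorem rate_split_zero (R1 R2 a1 e1 d1 g1 a2 e2 d2 g2 : ℝ) (hR2 : 0 ≤ R2)
    (dg1 : d1 ≤ g1) (h1 : R1 < d1) (h2 : R2 < d2)
    (h3 : R1 + R2 < a1 + g2) (h4 : R1 + R2 < a2 + g1) (h6 : 2 * R1 + R2 < a1 + g1 + e2)
    (c1 : R1 < a1 + e2) (ha1 : a1 ≤ 0) : ∃ S2 T2, 0 ≤ S2 ∧ T2 + S2 = R2 ∧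
      RateOK R1 0 T2 a1 e1 d1 g1 ∧ RateOK T2 S2 R1 a2 e2 d2 g2 := by
  by_cases ha2 : a2 ≤ 0
  · refine ⟨0, R2, le_rfl, by ring, ⟨.inl rfl, .inl rfl, .inr (by linarith), ?_⟩,
      ⟨.inl rfl, .inl rfl, .inr (by linarith), ?_⟩⟩ <;> exact .inr (.inr (by linarith))
  push Not at ha2
  obtain ⟨δ, h0, hδ⟩ := exists_delta [a2, e2 - R1, g1 - R1, a2 + g1 - R1 - R2,
    g1 + e2 - 2 * R1 - R2] (by
      intro s hs
      simp only [List.mem_cons, List.not_mem_nil, or_false] at hs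
      rcases hs with rfl | rfl | rfl | rfl | rfl <;> linarith)
  simp only [List.mem_cons, List.not_mem_nil, or_false, forall_eq_or_imp, forall_eq] at hδ
  obtain ⟨k1, k2, k3, k4, k5⟩ := hδ
  -- the smallest cloud rate of user 2 compatible with its satellite constraints
  set T2 := max 0 (max (R2 - a2 + δ) (R1 + R2 - e2 + δ)) with hT2
  have l2 : R2 - a2 + δ ≤ T2 := (le_max_left _ _).trans (le_max_right _ _)
  have l3 : R1 + R2 - e2 + δ ≤ T2 := (le_max_right _ _).trans (le_max_right _ _)
  have u1 : T2 ≤ R2 := max_le hR2 (max_le (by linarith) (by linarith))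
  have u2 : T2 < g1 - R1 := max_lt (by linarith) (max_lt (by linarith) (by linarith))
  exact ⟨R2 - T2, T2, by linarith, by ring,
    ⟨.inl rfl, .inl rfl, .inr (by linarith), .inr (.inr (by linarith))⟩,
    ⟨.inr (by linarith), .inr (.inr (by linarith)), .inr (by linarith),
      .inr (.inr (by linarith))⟩⟩

/-- Fourier-Motzkin elimination away from the two exceptional regions `a1 + e2 ≤ R1` and
`a2 + e1 ≤ R2`. -/
theorem rate_split (R1 R2 a1 e1 d1 g1 a2 e2 d2 g2 : ℝ) (hR1 : 0 ≤ R1) (hR2 : 0 ≤ R2)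
    (dg1 : d1 ≤ g1) (dg2 : d2 ≤ g2) (ae1 : a1 ≤ e1) (ae2 : a2 ≤ e2)
    (h1 : R1 < d1) (h2 : R2 < d2) (h3 : R1 + R2 < a1 + g2) (h4 : R1 + R2 < a2 + g1)
    (h5 : R1 + R2 < e1 + e2) (h6 : 2 * R1 + R2 < a1 + g1 + e2) (h7 : R1 + 2 * R2 < a2 + g2 + e1)
    (c1 : R1 < a1 + e2) (c2 : R2 < a2 + e1) : ∃ T1 S1 T2 S2, 0 ≤ S1 ∧ 0 ≤ S2 ∧ T1 + S1 = R1 ∧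
      T2 + S2 = R2 ∧ RateOK T1 S1 T2 a1 e1 d1 g1 ∧ RateOK T2 S2 T1 a2 e2 d2 g2 := by
  by_cases ha1 : a1 ≤ 0
  · obtain ⟨S2, T2, hS, hT, r1, r2⟩ := rate_split_zero R1 R2 a1 e1 d1 g1 a2 e2 d2 g2 hR2 dg1 h1 h2
      h3 h4 h6 c1 ha1
    exact ⟨R1, 0, T2, S2, le_rfl, hS, by ring, hT, r1, r2⟩
  by_cases ha2 : a2 ≤ 0
  · obtain ⟨S1, T1, hS, hT, r2, r1⟩ := rate_split_zero R2 R1 a2 e2 d2 g2 a1 e1 d1 g1 hR1 dg2 h2 h1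
      (by linarith) (by linarith) (by linarith) c2 ha2
    exact ⟨T1, S1, R2, 0, hS, le_rfl, hT, by ring, r1, r2⟩
  push Not at ha1 ha2
  obtain ⟨δ, h0, hδ⟩ := exists_delta [a1, a2, g1 - R1, g2 - R2, a1 + g2 - R1 - R2,
    a2 + g1 - R1 - R2, e1 + e2 - R1 - R2, a1 + g1 + e2 - 2 * R1 - R2, a2 + g2 + e1 - R1 - 2 * R2,
    a1 + e2 - R1, a2 + e1 - R2] (by
      intro s hs
      simp only [List.mem_cons, List.not_mem_nil, or_false] at hs
      rcases hs with rfl | rfl | rfl | rfl | rfl | rfl | rfl | rfl | rfl | rfl | rfl <;> linarith)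
  simp only [List.mem_cons, List.not_mem_nil, or_false, forall_eq_or_imp, forall_eq] at hδ
  obtain ⟨k1, k2, k3, k4, k5, k6, k7, k8, k9, k10, k11⟩ := hδ
  -- the least solution, up to `δ`, of the lower bounds on the cloud rates
  set T1 := max (max 0 (R1 - a1 + δ)) (max (R1 - e1 + δ) (R2 - a2 + R1 - e1 + 2 * δ)) with hT1
  set T2 := max (max 0 (R2 - a2 + δ)) (max (R2 - e2 + δ) (R1 - a1 + R2 - e2 + 2 * δ)) with hT2
  have p1 : 0 ≤ T1 := (le_max_left _ _).trans (le_max_left _ _)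
  have p2 : R1 - a1 + δ ≤ T1 := (le_max_right _ _).trans (le_max_left _ _)
  have p3 : R1 - e1 + δ ≤ T1 := (le_max_left _ _).trans (le_max_right _ _)
  have p4 : R2 - a2 + R1 - e1 + 2 * δ ≤ T1 := (le_max_right _ _).trans (le_max_right _ _)
  have q1 : 0 ≤ T2 := (le_max_left _ _).trans (le_max_left _ _)
  have q2 : R2 - a2 + δ ≤ T2 := (le_max_right _ _).trans (le_max_left _ _)
  have q3 : R2 - e2 + δ ≤ T2 := (le_max_left _ _).trans (le_max_right _ _)
  have q4 : R1 - a1 + R2 - e2 + 2 * δ ≤ T2 := (le_max_right _ _).trans (le_max_right _ _)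
  have m1 : ∀ x, 0 < x → R1 - a1 + δ < x → R1 - e1 + δ < x → R2 - a2 + R1 - e1 + 2 * δ < x →
    T1 < x := fun x y1 y2 y3 y4 => max_lt (max_lt y1 y2) (max_lt y3 y4)
  have m2 : ∀ x, 0 < x → R2 - a2 + δ < x → R2 - e2 + δ < x → R1 - a1 + R2 - e2 + 2 * δ < x →
    T2 < x := fun x y1 y2 y3 y4 => max_lt (max_lt y1 y2) (max_lt y3 y4)
  have u1 : T1 ≤ R1 := max_le (max_le hR1 (by linarith)) (max_le (by linarith) (by linarith))
  have u2 : T2 ≤ R2 := max_le (max_le hR2 (by linarith)) (max_le (by linarith) (by linarith))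
  have v1 : T1 < g2 - R2 := m1 _ (by linarith) (by linarith) (by linarith) (by linarith)
  have v2 : T2 < g1 - R1 := m2 _ (by linarith) (by linarith) (by linarith) (by linarith)
  have w1 : T2 < e1 - R1 + T1 := m2 _ (by linarith) (by linarith) (by linarith) (by linarith)
  have w2 : T1 < e2 - R2 + T2 := m1 _ (by linarith) (by linarith) (by linarith) (by linarith)
  exact ⟨T1, R1 - T1, T2, R2 - T2, by linarith, by linarith, by ring, by ring,
    ⟨.inr (by linarith), .inr (.inr (by linarith)), .inr (by linarith), .inr (.inr (by linarith))⟩,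
    ⟨.inr (by linarith), .inr (.inr (by linarith)), .inr (by linarith), .inr (.inr (by linarith))⟩⟩

/-! ### The Han-Kobayashi region -/

theorem cmi_map {Ω Ω' α β γ : Type*} [Fintype Ω] [Fintype Ω'] [Fintype α] [Fintype β] [Fintype γ]
    [DecidableEq Ω'] [DecidableEq α] [DecidableEq β] [DecidableEq γ] (p : Ω → ℝ) (π : Ω → Ω')
    (f : Ω' → α) (g : Ω' → β) (h : Ω' → γ) :
    cmi p (fun ω => f (π ω)) (fun ω => g (π ω)) (fun ω => h (π ω)) = cmi (pf p π) f g h := by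
  simp only [cmi]
  rw [margEnt_map p π (fun x => (f x, h x)), margEnt_map p π (fun x => (g x, h x)),
    margEnt_map p π (fun x => (f x, g x, h x)), margEnt_map p π h]

theorem ICAchievable_swap {X1 X2 Y1 Y2 : Type*} [Fintype X1] [Fintype X2] [Fintype Y1]
    [Fintype Y2] (chan : X1 → X2 → Y1 → Y2 → ℝ) (R1 R2 : ℝ)
    (h : ICAchievable (swapCh chan) R2 R1) : ICAchievable chan R1 R2 := by
  intro ε hε
  obtain ⟨N, hN⟩ := h ε hε
  refine ⟨N, fun n hn => ?_⟩
  obtain ⟨e2, e1, g2, g1, h⟩ := hN n hn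
  refine ⟨e1, e2, g1, g2, le_trans (le_of_eq ?_) h⟩
  simp only [icCodeErr, swapCh]
  congr 1
  · rw [mul_comm]
  · rw [Finset.sum_comm]
    refine Finset.sum_congr rfl fun m2 _ => Finset.sum_congr rfl fun m1 _ => ?_
    rw [Finset.sum_comm]
    refine Finset.sum_congr rfl fun y2 _ => Finset.sum_congr rfl fun y1 _ => ?_
    simp only [or_comm]

/-- Rates achieved when the first user superimposes nothing: it sends a single layer, decoded only
at its own receiver and treated as noise at the other, while the second user's message is decoded
at both receivers. -/
theorem achievable_merge {Q W1 W2 X1 X2 Y1 Y2 : Type*}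
    [Fintype Q] [Fintype W1] [Fintype W2]
    [Fintype X1] [Fintype X2] [Fintype Y1] [Fintype Y2]
    (chan : X1 → X2 → Y1 → Y2 → ℝ) (h0 : ∀ x1 x2 y1 y2, 0 ≤ chan x1 x2 y1 y2)
    (h1 : ∀ x1 x2, ∑ y1 : Y1, ∑ y2 : Y2, chan x1 x2 y1 y2 = 1)
    (pQ : Q → ℝ) (pW1 : Q → W1 → ℝ) (pW2 : Q → W2 → ℝ) (pX1 : W1 → Q → X1 → ℝ)
    (pX2 : W2 → Q → X2 → ℝ) (hQ : IsPmf pQ) (hW1 : ∀ q, IsPmf (pW1 q)) (hW2 : ∀ q, IsPmf (pW2 q))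
    (hX1 : ∀ w q, IsPmf (pX1 w q)) (hX2 : ∀ w q, IsPmf (pX2 w q)) (R1 R2 : ℝ) (hR1 : 0 ≤ R1)
    (V1 : Q → X1 → W2 → Y1 → ℝ) (hV1 : V1 = rxV pX2 chan)
    (V2 : Q → X2 → W1 → Y2 → ℝ) (hV2 : V2 = rxV pX1 (swapCh chan))
    (hd : R1 < Iof pQ pW1 pX1 pW2 V1 (uD pW1 pX1 V1))
    (hg : R1 + R2 < Iof pQ pW1 pX1 pW2 V1 (uG pW1 pX1 pW2 V1))
    (h2 : R2 < Iof pQ pW2 pX2 pW1 V2 (uG pW2 pX2 pW1 V2) -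
      Iof pQ pW2 pX2 pW1 V2 (uE pX2 pW1 V2)) : ICAchievable chan R1 R2 := by
  have h1' : ∀ x2 x1, ∑ y2 : Y2, ∑ y1 : Y1, swapCh chan x2 x1 y2 y1 = 1 := by
    intro x2 x1
    rw [Finset.sum_comm]
    exact h1 x1 x2
  have hV2p : ∀ q x w, IsPmf (V2 q x w) := by
    subst hV2
    exact rxV_isPmf pX1 (swapCh chan) (fun _ _ _ _ => h0 _ _ _ _) h1' hX1
  have := coding_theorem chan h0 h1 pQ unitW pW2 (mergeX pW1 pX1) pX2 hQ unitW_isPmf hW2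
    (mergeX_isPmf pW1 pX1 hW1 hX1) hX2 0 R1 R2 0 hR1 le_rfl V1 hV1 (mergeV pW1 V2)
    (by rw [hV2, rxV_mergeX])
    ⟨.inr ?_, .inr (.inr ?_), .inl rfl, .inl rfl⟩ ⟨.inl rfl, .inl rfl, .inr ?_, .inr (.inl rfl)⟩
  · simpa using this
  · rw [uA_mergeX, info_mergeX]
    exact hd
  · rw [uE_mergeX, info_mergeX pQ pW1 pX1 pW2 V1
      (fun q _ y => kG (pW1 q) (fun w x => pX1 w q x) (pW2 q) (V1 q) y)]
    exact hg
  · rw [add_zero]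
    exact h2.trans_le (info_mergeV pQ pW2 pX2 pW1 V2 hQ hW2 hX2 hW1 hV2p)

/-- **Proposition 3 (Chong-Motani-Garg-El Gamal simplified Han-Kobayashi region).**
If `Q, W1, W2, X1, X2` are distributed as `p(q)·p(w1|q)·p(w2|q)·p(x1|w1,q)·p(x2|w2,q)`
and the nonnegative rate pair `(R1,R2)` satisfies the seven inequalities below, then
`(R1,R2)` is achievable for the interference channel `p(y1,y2|x1,x2)`. -/
theorem chong_motani_garg_elgamal_HK_region
    {Q W1 W2 X1 X2 Y1 Y2 : Type*}
    [Fintype Q] [Fintype W1] [Fintype W2]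
    [Fintype X1] [Fintype X2] [Fintype Y1] [Fintype Y2]
    [DecidableEq Q] [DecidableEq W1] [DecidableEq W2] [DecidableEq X1] [DecidableEq X2]
    [DecidableEq Y1] [DecidableEq Y2]
    -- the channel
    (chan : X1 → X2 → Y1 → Y2 → ℝ) (hchannn : ∀ x1 x2 y1 y2, 0 ≤ chan x1 x2 y1 y2)
    (hchansum : ∀ x1 x2, ∑ y1 : Y1, ∑ y2 : Y2, chan x1 x2 y1 y2 = 1)
    -- the Han-Kobayashi input distribution
    (pQ : Q → ℝ) (hpQnn : ∀ q, 0 ≤ pQ q) (hpQsum : ∑ q : Q, pQ q = 1)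
    (pW1 : Q → W1 → ℝ) (hpW1nn : ∀ q w1, 0 ≤ pW1 q w1)
    (hpW1sum : ∀ q, ∑ w1 : W1, pW1 q w1 = 1)
    (pW2 : Q → W2 → ℝ) (hpW2nn : ∀ q w2, 0 ≤ pW2 q w2)
    (hpW2sum : ∀ q, ∑ w2 : W2, pW2 q w2 = 1)
    (pX1 : W1 → Q → X1 → ℝ) (hpX1nn : ∀ w1 q x1, 0 ≤ pX1 w1 q x1)
    (hpX1sum : ∀ w1 q, ∑ x1 : X1, pX1 w1 q x1 = 1)
    (pX2 : W2 → Q → X2 → ℝ) (hpX2nn : ∀ w2 q x2, 0 ≤ pX2 w2 q x2)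
    (hpX2sum : ∀ w2 q, ∑ x2 : X2, pX2 w2 q x2 = 1)
    -- the joint distribution of the channel variables
    (p : Omega7 Q W1 W2 X1 X2 Y1 Y2 → ℝ)
    (hp : ∀ q w1 w2 x1 x2 y1 y2,
      p (q, w1, w2, x1, x2, y1, y2) =
        pQ q * pW1 q w1 * pW2 q w2 * pX1 w1 q x1 * pX2 w2 q x2 * chan x1 x2 y1 y2)
    -- the rate pair
    (R1 R2 : ℝ) (hR1 : 0 ≤ R1) (hR2 : 0 ≤ R2)
    -- the seven Han-Kobayashi inequalities
    (h1 : R1 < cmi p qX1 qY1 (fun ω => (qQ ω, qW2 ω)))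
    (h2 : R2 < cmi p qX2 qY2 (fun ω => (qQ ω, qW1 ω)))
    (h3 : R1 + R2 < cmi p qX1 qY1 (fun ω => (qQ ω, qW1 ω, qW2 ω))
        + cmi p (fun ω => (qW1 ω, qX2 ω)) qY2 qQ)
    (h4 : R1 + R2 < cmi p qX2 qY2 (fun ω => (qQ ω, qW1 ω, qW2 ω))
        + cmi p (fun ω => (qW2 ω, qX1 ω)) qY1 qQ)
    (h5 : R1 + R2 < cmi p (fun ω => (qW2 ω, qX1 ω)) qY1 (fun ω => (qQ ω, qW1 ω))
        + cmi p (fun ω => (qW1 ω, qX2 ω)) qY2 (fun ω => (qQ ω, qW2 ω)))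
    (h6 : 2 * R1 + R2 < cmi p qX1 qY1 (fun ω => (qQ ω, qW1 ω, qW2 ω))
        + cmi p (fun ω => (qW2 ω, qX1 ω)) qY1 qQ
        + cmi p (fun ω => (qW1 ω, qX2 ω)) qY2 (fun ω => (qQ ω, qW2 ω)))
    (h7 : R1 + 2 * R2 < cmi p qX2 qY2 (fun ω => (qQ ω, qW1 ω, qW2 ω))
        + cmi p (fun ω => (qW1 ω, qX2 ω)) qY2 qQ
        + cmi p (fun ω => (qW2 ω, qX1 ω)) qY1 (fun ω => (qQ ω, qW1 ω))) :
    ICAchievable chan R1 R2 := by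
  have hQ : IsPmf pQ := ⟨hpQnn, hpQsum⟩
  have hW1 : ∀ q, IsPmf (pW1 q) := fun q => ⟨hpW1nn q, hpW1sum q⟩
  have hW2 : ∀ q, IsPmf (pW2 q) := fun q => ⟨hpW2nn q, hpW2sum q⟩
  have hX1 : ∀ w q, IsPmf (pX1 w q) := fun w q => ⟨hpX1nn w q, hpX1sum w q⟩
  have hX2 : ∀ w q, IsPmf (pX2 w q) := fun w q => ⟨hpX2nn w q, hpX2sum w q⟩
  have hsw0 : ∀ x2 x1 y2 y1, 0 ≤ swapCh chan x2 x1 y2 y1 := fun _ _ _ _ => hchannn _ _ _ _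
  have hsw1 : ∀ x2 x1, ∑ y2 : Y2, ∑ y1 : Y1, swapCh chan x2 x1 y2 y1 = 1 := by
    intro x2 x1
    rw [Finset.sum_comm]
    exact hchansum x1 x2
  obtain ⟨V1, hV1⟩ : ∃ V1 : Q → X1 → W2 → Y1 → ℝ, V1 = rxV pX2 chan := ⟨_, rfl⟩
  obtain ⟨V2, hV2⟩ : ∃ V2 : Q → X2 → W1 → Y2 → ℝ, V2 = rxV pX1 (swapCh chan) := ⟨_, rfl⟩
  have hV1p : ∀ q x w, IsPmf (V1 q x w) := by
    rw [hV1]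
    exact rxV_isPmf pX2 chan hchannn hchansum hX2
  have hV2p : ∀ q x w, IsPmf (V2 q x w) := by
    rw [hV2]
    exact rxV_isPmf pX1 (swapCh chan) hsw0 hsw1 hX1
  have r1 := pf_rx1 chan pQ pW1 pW2 pX1 pX2 p hp
  have r2 := pf_rx2 chan pQ pW1 pW2 pX1 pX2 p hp
  rw [← hV1] at r1
  rw [← hV2] at r2
  -- each mutual information is the mean of a log-likelihood ratio at one receiver
  have a1 : cmi p qX1 qY1 (fun ω => (qQ ω, qW1 ω, qW2 ω)) = Iof pQ pW1 pX1 pW2 V1 (uA pX1 V1) := by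
    rw [← cmi_a pQ pW1 pX1 pW2 V1 hQ hW1 hX1 hW2 hV1p, ← r1, ← cmi_map]
  have d1 : cmi p qX1 qY1 (fun ω => (qQ ω, qW2 ω)) =
      Iof pQ pW1 pX1 pW2 V1 (uD pW1 pX1 V1) := by
    rw [← cmi_d pQ pW1 pX1 pW2 V1 hQ hW1 hX1 hW2 hV1p, ← r1, ← cmi_map]
  have e1 : cmi p (fun ω => (qW2 ω, qX1 ω)) qY1 (fun ω => (qQ ω, qW1 ω)) =
      Iof pQ pW1 pX1 pW2 V1 (uE pX1 pW2 V1) := by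
    rw [← cmi_e pQ pW1 pX1 pW2 V1 hQ hW1 hX1 hW2 hV1p, ← r1, ← cmi_map]
  have g1 : cmi p (fun ω => (qW2 ω, qX1 ω)) qY1 qQ =
      Iof pQ pW1 pX1 pW2 V1 (uG pW1 pX1 pW2 V1) := by
    rw [← cmi_g pQ pW1 pX1 pW2 V1 hQ hW1 hX1 hW2 hV1p, ← r1, ← cmi_map]
  have a2 : cmi p qX2 qY2 (fun ω => (qQ ω, qW1 ω, qW2 ω)) = Iof pQ pW2 pX2 pW1 V2 (uA pX2 V2) := by
    rw [← cmi_a' pQ pW2 pX2 pW1 V2 hQ hW2 hX2 hW1 hV2p, ← r2, ← cmi_map]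
  have d2 : cmi p qX2 qY2 (fun ω => (qQ ω, qW1 ω)) =
      Iof pQ pW2 pX2 pW1 V2 (uD pW2 pX2 V2) := by
    rw [← cmi_d pQ pW2 pX2 pW1 V2 hQ hW2 hX2 hW1 hV2p, ← r2, ← cmi_map]
  have e2 : cmi p (fun ω => (qW1 ω, qX2 ω)) qY2 (fun ω => (qQ ω, qW2 ω)) =
      Iof pQ pW2 pX2 pW1 V2 (uE pX2 pW1 V2) := by
    rw [← cmi_e pQ pW2 pX2 pW1 V2 hQ hW2 hX2 hW1 hV2p, ← r2, ← cmi_map]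
  have g2 : cmi p (fun ω => (qW1 ω, qX2 ω)) qY2 qQ =
      Iof pQ pW2 pX2 pW1 V2 (uG pW2 pX2 pW1 V2) := by
    rw [← cmi_g pQ pW2 pX2 pW1 V2 hQ hW2 hX2 hW1 hV2p, ← r2, ← cmi_map]
  rw [d1] at h1
  rw [d2] at h2
  rw [a1, g2] at h3
  rw [a2, g1] at h4
  rw [e1, e2] at h5
  rw [a1, g1, e2] at h6
  rw [a2, g2, e1] at h7
  by_cases c1 : Iof pQ pW1 pX1 pW2 V1 (uA pX1 V1) + Iof pQ pW2 pX2 pW1 V2 (uE pX2 pW1 V2) ≤ R1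
  · exact achievable_merge chan hchannn hchansum pQ pW1 pW2 pX1 pX2 hQ hW1 hW2 hX1 hX2 R1 R2 hR1
      V1 hV1 V2 hV2 h1 (by linarith) (by linarith)
  by_cases c2 : Iof pQ pW2 pX2 pW1 V2 (uA pX2 V2) + Iof pQ pW1 pX1 pW2 V1 (uE pX1 pW2 V1) ≤ R2
  · exact ICAchievable_swap _ _ _ (achievable_merge (swapCh chan) hsw0 hsw1 pQ pW2 pW1 pX2 pX1
      hQ hW2 hW1 hX2 hX1 R2 R1 hR2 V2 hV2 V1 hV1 h2 (by linarith) (by linarith))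
  push Not at c1 c2
  obtain ⟨T1, S1, T2, S2, hS1, hS2, rfl, rfl, k1, k2⟩ := rate_split R1 R2 _ _ _ _ _ _ _ _ hR1 hR2
    (info_d_le_g pQ pW1 pX1 pW2 V1 hQ hW1 hX1 hW2 hV1p)
    (info_d_le_g pQ pW2 pX2 pW1 V2 hQ hW2 hX2 hW1 hV2p)
    (info_a_le_e pQ pW1 pX1 pW2 V1 hQ hW1 hX1 hW2 hV1p)
    (info_a_le_e pQ pW2 pX2 pW1 V2 hQ hW2 hX2 hW1 hV2p) h1 h2 h3 h4 h5 h6 h7 c1 c2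
  exact coding_theorem chan hchannn hchansum pQ pW1 pW2 pX1 pX2 hQ hW1 hW2 hX1 hX2 T1 S1 T2 S2
    hS1 hS2 V1 hV1 V2 hV2 k1 k2
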